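/- arXiv:1508.02106 — 2 statements merged into one kernel-verified Lean document; each statement's English description precedes it below -/
import Mathlib

section
/- For all real x ≥ 1, ∑_{n ≤ x} 2^{ω(n)}/n ≤ (3/π²)·log²x + 1.3948·log x + 0.4107 + 3.253·x^{-1/3}. -/
open Filter Topology Finset

theorem le_of_tendsto_of_succ_le {f : ℕ → ℝ} {L : ℝ} {N : ℕ} (hf : Tendsto f atTop (𝓝 L))
    (h : ∀ n, N ≤ n → f (n + 1) ≤ f n) : L ≤ f N := by
  refine le_of_tendsto hf ?_
  filter_upwards [eventually_ge_atTop N] with n hn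
  induction n, hn using Nat.le_induction with
  | base => exact le_rfl
  | succ n hn ih => exact (h n hn).trans ih

theorem log_one_add_inv_lower {a : ℝ} (ha : 0 < a) :
    2 / (2 * a + 1) + 2 / (3 * (2 * a + 1) ^ 3) ≤ Real.log (a + 1) - Real.log a := by
  have h := Real.hasSum_log_one_add_inv ha
  have h2 := sum_le_hasSum (range 2) (fun i _ => by positivity) h
  rw [← Real.log_div (by positivity) (by positivity)]
  have e : (a + 1) / a = 1 + a⁻¹ := by field_simp
  rw [e]
  refine le_trans (le_of_eq ?_) h2
  simp [sum_range_succ]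
  field_simp
  ring

theorem log_one_add_inv_upper {a : ℝ} (ha : 0 < a) :
    Real.log (a + 1) - Real.log a ≤ 2 / (2 * a + 1) + 2 / (3 * (2 * a + 1) ^ 3) +
      1 / (10 * a * (a + 1) * (2 * a + 1) ^ 3) := by
  have h := Real.hasSum_log_one_add_inv ha
  rw [← hasSum_nat_add_iff' 2] at h
  have hz1 : (1 / (2 * a + 1)) ^ 2 < 1 := by
    rw [div_pow, div_lt_one (by positivity)]; nlinarith
  have hg := (hasSum_geometric_of_lt_one (by positivity) hz1).mul_left
    (2 / 5 * (1 / (2 * a + 1)) ^ 5)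
  have h3 := hasSum_le (fun k => ?_) h hg
  · rw [← Real.log_div (by positivity) (by positivity)]
    have e : (a + 1) / a = 1 + a⁻¹ := by field_simp
    rw [e]
    have e2 : 2 / 5 * (1 / (2 * a + 1)) ^ 5 * (1 - (1 / (2 * a + 1)) ^ 2)⁻¹ =
        1 / (10 * a * (a + 1) * (2 * a + 1) ^ 3) := by
      have : (1 - (1 / (2 * a + 1)) ^ 2) = 4 * a * (a + 1) / (2 * a + 1) ^ 2 := by
        field_simp; ring
      rw [this]; field_simp; norm_num
    rw [e2] at h3
    have e3 : ∑ i ∈ range 2, (2 : ℝ) * (1 / (2 * (i : ℝ) + 1)) * (1 / (2 * a + 1)) ^ (2 * i + 1) =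
        2 / (2 * a + 1) + 2 / (3 * (2 * a + 1) ^ 3) := by
      simp [sum_range_succ]
      field_simp
      ring
    linarith
  · have e : (1 / (2 * a + 1)) ^ (2 * (k + 2) + 1) =
        (1 / (2 * a + 1)) ^ 5 * ((1 / (2 * a + 1)) ^ 2) ^ k := by
      rw [← pow_mul, ← pow_add]; congr 1; ring
    rw [e, ← mul_assoc]
    push_cast
    gcongr
    have : (1 : ℝ) / (2 * (k + 2) + 1) ≤ 1 / 5 := by
      apply one_div_le_one_div_of_le (by norm_num)
      have : (0 : ℝ) ≤ k := by positivity
      linarith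
    linarith

theorem harmonic_sub_log_lower {n : ℕ} (hn : 1 ≤ n) :
    1 / (2 * n) - 1 / (12 * (n : ℝ) ^ 2) ≤
      harmonic n - Real.log n - Real.eulerMascheroniConstant := by
  have key := le_of_tendsto_of_succ_le (N := n)
    (f := fun n : ℕ => (harmonic n - Real.log n) - 1 / 2 * (n : ℝ)⁻¹ + 1 / 12 * ((n : ℝ)⁻¹) ^ 2)
    (L := Real.eulerMascheroniConstant - 1 / 2 * 0 + 1 / 12 * 0 ^ 2) ?_ ?_
  · simp only [one_div, mul_inv, inv_pow] at key ⊢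
    linarith
  · have hi := tendsto_inv_atTop_nhds_zero_nat (𝕜 := ℝ)
    exact (Real.tendsto_harmonic_sub_log.sub (hi.const_mul _)).add ((hi.pow 2).const_mul _)
  · intro m hm
    have hm0 : (1 : ℝ) ≤ m := by exact_mod_cast hn.trans hm
    have h := log_one_add_inv_lower (a := m) (by linarith)
    rw [harmonic_succ]
    push_cast
    have : (m + 1 : ℝ)⁻¹ + 1 / 2 * (m : ℝ)⁻¹ - 1 / 2 * (m + 1 : ℝ)⁻¹ - 1 / 12 * (m : ℝ)⁻¹ ^ 2
        + 1 / 12 * (m + 1 : ℝ)⁻¹ ^ 2 ≤ 2 / (2 * (m : ℝ) + 1) + 2 / (3 * (2 * m + 1) ^ 3) := by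
      obtain ⟨t, ht⟩ : ∃ t : ℝ, (m : ℝ) = t + 1 := ⟨m - 1, by ring⟩
      have ht0 : 0 ≤ t := by linarith
      rw [ht, ← sub_nonneg]
      have : 0 ≤ t := ht0
      field_simp
      ring_nf
      positivity
    linarith

theorem harmonic_sub_log_upper {n : ℕ} (hn : 1 ≤ n) :
    harmonic n - Real.log n - Real.eulerMascheroniConstant ≤
      1 / (2 * n) - 1 / (12 * (n : ℝ) ^ 2) + 1 / (60 * (n : ℝ) ^ 4) := by
  have key := le_of_tendsto_of_succ_le (N := n)
    (f := fun n : ℕ => -((harmonic n - Real.log n) - 1 / 2 * (n : ℝ)⁻¹ + 1 / 12 * ((n : ℝ)⁻¹) ^ 2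
      - 1 / 60 * ((n : ℝ)⁻¹) ^ 4))
    (L := -(Real.eulerMascheroniConstant - 1 / 2 * 0 + 1 / 12 * 0 ^ 2 - 1 / 60 * 0 ^ 4)) ?_ ?_
  · simp only [one_div, mul_inv, inv_pow] at key ⊢
    linarith
  · have hi := tendsto_inv_atTop_nhds_zero_nat (𝕜 := ℝ)
    exact (((Real.tendsto_harmonic_sub_log.sub (hi.const_mul _)).add
      ((hi.pow 2).const_mul _)).sub ((hi.pow 4).const_mul _)).neg
  · intro m hm
    have hm0 : (1 : ℝ) ≤ m := by exact_mod_cast hn.trans hm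
    have h := log_one_add_inv_upper (a := m) (by linarith)
    rw [harmonic_succ]
    push_cast
    have : 2 / (2 * (m : ℝ) + 1) + 2 / (3 * (2 * m + 1) ^ 3) +
        1 / (10 * m * (m + 1) * (2 * m + 1) ^ 3) ≤
        (m + 1 : ℝ)⁻¹ + 1 / 2 * (m : ℝ)⁻¹ - 1 / 2 * (m + 1 : ℝ)⁻¹ - 1 / 12 * (m : ℝ)⁻¹ ^ 2
        + 1 / 12 * (m + 1 : ℝ)⁻¹ ^ 2 + 1 / 60 * (m : ℝ)⁻¹ ^ 4 - 1 / 60 * (m + 1 : ℝ)⁻¹ ^ 4 := by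
      obtain ⟨t, ht⟩ : ∃ t : ℝ, (m : ℝ) = t + 1 := ⟨m - 1, by ring⟩
      have ht0 : 0 ≤ t := by linarith
      rw [ht, ← sub_nonneg]
      field_simp
      ring_nf
      positivity
    linarith

/-- `∑_{k ≤ n} log (n / k) / k` minus its leading terms. -/
noncomputable def logHarmonicSeq (n : ℕ) : ℝ :=
  Real.log n * harmonic n - ∑ k ∈ Ioc 0 n, Real.log k / k - 1 / 2 * Real.log n ^ 2 -
    Real.eulerMascheroniConstant * Real.log n

theorem logHarmonicSeq_succ_sub (n : ℕ) :
    logHarmonicSeq (n + 1) - logHarmonicSeq n =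
      (Real.log (n + 1) - Real.log n) * (harmonic n - Real.log n - Real.eulerMascheroniConstant -
        1 / 2 * (Real.log (n + 1) - Real.log n)) := by
  have h : ∑ k ∈ Ioc 0 (n + 1), Real.log k / k =
      ∑ k ∈ Ioc 0 n, Real.log k / k + Real.log (n + 1) / (n + 1) := by
    rw [sum_Ioc_succ_top (by omega)]; push_cast; rfl
  unfold logHarmonicSeq
  rw [h, harmonic_succ]
  push_cast
  field_simp
  ring

theorem half_log_sub_log_le {n : ℕ} (hn : 1 ≤ n) :
    1 / 2 * (Real.log (n + 1) - Real.log n) ≤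
      harmonic n - Real.log n - Real.eulerMascheroniConstant := by
  have hn0 : (1 : ℝ) ≤ n := by exact_mod_cast hn
  have h2 := log_one_add_inv_upper (a := n) (by linarith)
  have h3 := harmonic_sub_log_lower hn
  have h5 : 0 ≤ 1 / (2 * n) - 1 / (12 * (n : ℝ) ^ 2) - 1 / 2 * (2 / (2 * (n : ℝ) + 1) +
      2 / (3 * (2 * n + 1) ^ 3) + 1 / (10 * n * (n + 1) * (2 * n + 1) ^ 3)) := by
    obtain ⟨t, ht⟩ : ∃ t : ℝ, (n : ℝ) = t + 1 := ⟨n - 1, by ring⟩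
    have ht0 : 0 ≤ t := by linarith
    rw [ht]
    field_simp
    ring_nf
    positivity
  linarith

theorem logHarmonicSeq_le_succ {n : ℕ} (hn : 1 ≤ n) :
    logHarmonicSeq n ≤ logHarmonicSeq (n + 1) := by
  have hn0 : (1 : ℝ) ≤ n := by exact_mod_cast hn
  have hlog : Real.log n ≤ Real.log (n + 1) := Real.log_le_log (by linarith) (by linarith)
  have h := half_log_sub_log_le hn
  rw [← sub_nonneg, logHarmonicSeq_succ_sub]
  apply mul_nonneg <;> linarith

theorem logHarmonicSeq_succ_le {n : ℕ} (hn : 1 ≤ n) :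
    logHarmonicSeq (n + 1) + 1 / 12 * ((n + 1 : ℕ) : ℝ)⁻¹ ^ 2 ≤
      logHarmonicSeq n + 1 / 12 * (n : ℝ)⁻¹ ^ 2 := by
  have hn0 : (1 : ℝ) ≤ n := by exact_mod_cast hn
  have h1 := log_one_add_inv_lower (a := n) (by linarith)
  have h3 := harmonic_sub_log_upper hn
  have hd := logHarmonicSeq_succ_sub n
  set s := Real.log (n + 1) - Real.log n
  set h := (harmonic n : ℝ) - Real.log n - Real.eulerMascheroniConstant
  obtain ⟨S, hS⟩ : ∃ S, S = 2 / (2 * (n : ℝ) + 1) + 2 / (3 * (2 * (n : ℝ) + 1) ^ 3) := ⟨_, rfl⟩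
  obtain ⟨T, hT⟩ : ∃ T, T = 1 / (2 * n) - 1 / (12 * (n : ℝ) ^ 2) + 1 / (60 * (n : ℝ) ^ 4) :=
    ⟨_, rfl⟩
  rw [← hS] at h1
  rw [← hT] at h3
  have hS0 : 0 < S := by rw [hS]; positivity
  have hTS : T ≤ S := by
    obtain ⟨t, ht⟩ : ∃ t : ℝ, (n : ℝ) = t + 1 := ⟨n - 1, by ring⟩
    have ht0 : 0 ≤ t := by linarith
    rw [hT, hS, ht, ← sub_nonneg]
    field_simp
    ring_nf
    positivity
  have h5 : S * (T - 1 / 2 * S) ≤ 1 / 12 * (n : ℝ)⁻¹ ^ 2 - 1 / 12 * ((n : ℝ) + 1)⁻¹ ^ 2 := by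
    obtain ⟨t, ht⟩ : ∃ t : ℝ, (n : ℝ) = t + 1 := ⟨n - 1, by ring⟩
    have ht0 : 0 ≤ t := by linarith
    rw [hT, hS, ht, ← sub_nonneg]
    field_simp
    ring_nf
    positivity
  have h6 : s * (h - 1 / 2 * s) ≤ s * (T - 1 / 2 * s) := by
    apply mul_le_mul_of_nonneg_left <;> linarith
  have h7 : s * (T - 1 / 2 * s) ≤ S * (T - 1 / 2 * S) := by nlinarith
  push_cast
  linarith

theorem exists_logHarmonicSeq_limit : ∃ Q : ℝ, ∀ n : ℕ, 1 ≤ n →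
    logHarmonicSeq n ≤ Q ∧ Q ≤ logHarmonicSeq n + 1 / (12 * (n : ℝ) ^ 2) := by
  have hmono : Monotone fun n => logHarmonicSeq (n + 1) :=
    monotone_nat_of_le_succ fun n => logHarmonicSeq_le_succ (by omega)
  have hanti : Antitone fun n : ℕ => logHarmonicSeq (n + 1) + 1 / 12 * ((n + 1 : ℕ) : ℝ)⁻¹ ^ 2 :=
    antitone_nat_of_succ_le fun n => logHarmonicSeq_succ_le (by omega)
  have hle : ∀ m n : ℕ, logHarmonicSeq (m + 1) ≤
      logHarmonicSeq (n + 1) + 1 / 12 * ((n + 1 : ℕ) : ℝ)⁻¹ ^ 2 := by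
    intro m n
    have h1 := hmono (le_max_left m n)
    have h2 := hanti (le_max_right m n)
    simp only at h1 h2
    have : (0 : ℝ) ≤ 1 / 12 * ((max m n + 1 : ℕ) : ℝ)⁻¹ ^ 2 := by positivity
    linarith
  refine ⟨⨆ n, logHarmonicSeq (n + 1), fun n hn => ?_⟩
  obtain ⟨k, rfl⟩ : ∃ k, n = k + 1 := ⟨n - 1, by omega⟩
  constructor
  · exact le_ciSup (f := fun n => logHarmonicSeq (n + 1))
      ⟨_, by rintro _ ⟨m, rfl⟩; exact hle m 0⟩ k
  · refine (ciSup_le fun m => hle m k).trans (le_of_eq ?_)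
    simp only [one_div, mul_inv, inv_pow]

theorem log_seven_bounds : 1.9459101485 < Real.log 7 ∧ Real.log 7 < 1.9459101497 := by
  have h1 := log_one_add_inv_lower (a := 49) (by norm_num)
  have h2 := log_one_add_inv_upper (a := 49) (by norm_num)
  have e1 : Real.log 49 = 2 * Real.log 7 := by
    rw [show (49 : ℝ) = 7 ^ 2 by norm_num, Real.log_pow]; norm_num
  have e2 : Real.log (49 + 1) = Real.log 2 + 2 * Real.log 5 := by
    rw [show (49 + 1 : ℝ) = 2 * 5 ^ 2 by norm_num, Real.log_mul (by norm_num) (by norm_num),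
      Real.log_pow]; norm_num
  rw [e1, e2] at h1 h2
  have := Real.log_two_gt_d9
  have := Real.log_two_lt_d9
  have := Real.log_five_gt_d9
  have := Real.log_five_lt_d9
  norm_num at h1 h2
  constructor <;> linarith

theorem eulerMascheroni_upper : Real.eulerMascheroniConstant < 0.577215676 := by
  have h := harmonic_sub_log_lower (n := 32) (by norm_num)
  have e : Real.log (32 : ℕ) = 5 * Real.log 2 := by
    rw [show ((32 : ℕ) : ℝ) = 2 ^ 5 by norm_num, Real.log_pow]; norm_num
  rw [e] at h
  have := Real.log_two_gt_d9
  norm_num [harmonic, sum_range_succ] at h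
  linarith

theorem eulerMascheroni_lower : 0.57721565 < Real.eulerMascheroniConstant := by
  have h := harmonic_sub_log_upper (n := 32) (by norm_num)
  have e : Real.log (32 : ℕ) = 5 * Real.log 2 := by
    rw [show ((32 : ℕ) : ℝ) = 2 ^ 5 by norm_num, Real.log_pow]; norm_num
  rw [e] at h
  have := Real.log_two_lt_d9
  norm_num [harmonic, sum_range_succ] at h
  linarith

theorem log_six_eq : Real.log 6 = Real.log 2 + Real.log 3 := by
  rw [← Real.log_mul (by norm_num) (by norm_num)]; norm_num
theorem log_eight_eq : Real.log 8 = 3 * Real.log 2 := by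
  rw [show (8 : ℝ) = 2 ^ 3 by norm_num, Real.log_pow]; norm_num
theorem log_nine_eq : Real.log 9 = 2 * Real.log 3 := by
  rw [show (9 : ℝ) = 3 ^ 2 by norm_num, Real.log_pow]; norm_num

theorem logHarmonicSeq_ten_bounds :
    0.0718 < logHarmonicSeq 10 ∧ logHarmonicSeq 10 < 0.071985 := by
  have a1 := Real.log_two_gt_d9
  have a2 := Real.log_two_lt_d9
  have b1 := Real.log_three_gt_d9
  have b2 := Real.log_three_lt_d9
  have d1 := Real.log_five_gt_d9
  have d2 := Real.log_five_lt_d9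
  have e1 := log_seven_bounds.1
  have e2 := log_seven_bounds.2
  have g1 := eulerMascheroni_lower
  have g2 := eulerMascheroni_upper
  have h : logHarmonicSeq 10 = Real.log 10 * (7381 / 2520 - Real.eulerMascheroniConstant) -
      (Real.log 2 / 2 + Real.log 3 / 3 + Real.log 4 / 4 + Real.log 5 / 5 + Real.log 6 / 6 +
        Real.log 7 / 7 + Real.log 8 / 8 + Real.log 9 / 9 + Real.log 10 / 10) -
      1 / 2 * Real.log 10 ^ 2 := by
    unfold logHarmonicSeq
    simp [sum_Ioc_succ_top, harmonic, sum_range_succ]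
    ring
  rw [h, log_six_eq, Real.log_four_eq, log_eight_eq, log_nine_eq, Real.log_ten_eq]
  set X := Real.log 2 + Real.log 5
  have X1 : 2.3025850926 < X := by simp only [X]; linarith
  have X2 : X < 2.3025850934 := by simp only [X]; linarith
  constructor
  · nlinarith
  · nlinarith

theorem tendsto_log_pow_div (j : ℕ) :
    Tendsto (fun n : ℕ => Real.log n ^ j / (n : ℝ)) atTop (𝓝 0) := by
  have h := (Real.tendsto_pow_log_div_mul_add_atTop 1 0 j one_ne_zero).comp
    tendsto_natCast_atTop_atTop
  simpa [Function.comp_def] using h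

theorem summable_log_pow_div_sq (j : ℕ) :
    Summable fun n : ℕ => Real.log n ^ j / (n : ℝ) ^ 2 := by
  have h : (fun n : ℕ => Real.log n ^ j / (n : ℝ) ^ 2) =O[atTop]
      fun n : ℕ => (n : ℝ) ^ (-(3 / 2) : ℝ) := by
    have h1 := (isLittleO_log_rpow_rpow_atTop (s := 1 / 2) (j : ℝ) (by norm_num)).isBigO
    have h2 := (h1.comp_tendsto tendsto_natCast_atTop_atTop).mul
      (Asymptotics.isBigO_refl (fun n : ℕ => ((n : ℝ) ^ 2)⁻¹) atTop)
    refine h2.congr' ?_ ?_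
    · filter_upwards with n
      simp [div_eq_mul_inv]
    · filter_upwards [eventually_gt_atTop 0] with n hn
      have : (0 : ℝ) < n := by exact_mod_cast hn
      simp only [Function.comp]
      rw [← Real.rpow_natCast (n : ℝ) 2, ← Real.rpow_neg this.le, ← Real.rpow_add this]
      norm_num
  exact summable_of_isBigO_nat (Real.summable_nat_rpow.mpr (by norm_num)) h

theorem log_ge_of_ten_le {n : ℕ} (hn : 10 ≤ n) : 2 ≤ Real.log n := by
  have h : Real.log 10 ≤ Real.log n := Real.log_le_log (by norm_num) (by exact_mod_cast hn)
  rw [Real.log_ten_eq] at h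
  linarith [Real.log_two_gt_d9, Real.log_five_gt_d9]

theorem log_le_of_ten_le {n : ℕ} (hn : 10 ≤ n) : Real.log n ≤ 3 / 10 * n := by
  have hn0 : (10 : ℝ) ≤ n := by exact_mod_cast hn
  have h := Real.log_le_sub_one_of_pos (x := (n : ℝ) / 10) (by positivity)
  rw [Real.log_div (by positivity) (by norm_num), Real.log_ten_eq] at h
  linarith [Real.log_two_lt_d9, Real.log_five_lt_d9]

theorem tsum_log_div_sq_upper : ∑' n : ℕ, Real.log n / (n : ℝ) ^ 2 < 0.93754867 := by
  have hs : Summable fun n : ℕ => Real.log n / (n : ℝ) ^ 2 := by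
    simpa using summable_log_pow_div_sq 1
  have h0 := tendsto_log_pow_div 0
  have h1 := tendsto_log_pow_div 1
  simp only [pow_zero, pow_one] at h0 h1
  have key := le_of_tendsto_of_succ_le (N := 10)
    (f := fun n : ℕ => ∑ k ∈ range n, Real.log k / (k : ℝ) ^ 2 + (Real.log n / n + 1 / n +
      1 / 2 * (Real.log n / n * (1 / n)) - 1 / 12 * (1 / (n : ℝ)) ^ 3 +
        1 / 6 * (Real.log n / n * (1 / n) ^ 2)))
    (L := ∑' n : ℕ, Real.log n / (n : ℝ) ^ 2 + (0 + 0 + 1 / 2 * (0 * 0) - 1 / 12 * 0 ^ 3 +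
      1 / 6 * (0 * 0 ^ 2))) ?_ ?_
  · simp [sum_range_succ] at key
    rw [log_six_eq, Real.log_four_eq, log_eight_eq, log_nine_eq, Real.log_ten_eq] at key
    have a2 := Real.log_two_lt_d9
    have b2 := Real.log_three_lt_d9
    have d2 := Real.log_five_lt_d9
    have e2 := log_seven_bounds.2
    norm_num at key ⊢
    linarith
  · exact hs.hasSum.tendsto_sum_nat.add ((((h1.add h0).add ((h1.mul h0).const_mul _)).sub
      ((h0.pow 3).const_mul _)).add ((h1.mul (h0.pow 2)).const_mul _))
  · intro n hn
    have hn0 : (10 : ℝ) ≤ n := by exact_mod_cast hn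
    have hl := log_ge_of_ten_le hn
    have hu := log_one_add_inv_upper (a := n) (by linarith)
    rw [sum_range_succ]
    push_cast
    obtain ⟨l, hl'⟩ : ∃ l, l = Real.log n := ⟨_, rfl⟩
    obtain ⟨s, hs'⟩ : ∃ s, s = Real.log (n + 1) - Real.log n := ⟨_, rfl⟩
    obtain ⟨S, hS⟩ : ∃ S, S = 2 / (2 * (n : ℝ) + 1) + 2 / (3 * (2 * (n : ℝ) + 1) ^ 3) +
      1 / (10 * n * (n + 1) * (2 * n + 1) ^ 3) := ⟨_, rfl⟩
    have hls : Real.log (n + 1) = l + s := by rw [hs', hl']; ring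
    rw [← hs', ← hS] at hu
    rw [hls, ← hl']
    rw [← hl'] at hl
    obtain ⟨t, ht⟩ : ∃ t : ℝ, (n : ℝ) = t + 10 := ⟨n - 10, by ring⟩
    have ht0 : 0 ≤ t := by linarith
    obtain ⟨A, hA⟩ : ∃ A : ℝ, A = 1 / (n : ℝ) - 1 / (n + 1) - 1 / 2 * (1 / n) ^ 2 -
      1 / 2 * (1 / (n + 1)) ^ 2 + 1 / 6 * (1 / n) ^ 3 - 1 / 6 * (1 / (n + 1)) ^ 3 := ⟨_, rfl⟩
    obtain ⟨B, hB⟩ : ∃ B : ℝ, B = 1 / ((n : ℝ) + 1) + 1 / 2 * (1 / (n + 1)) ^ 2 +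
      1 / 6 * (1 / (n + 1)) ^ 3 := ⟨_, rfl⟩
    obtain ⟨C, hC⟩ : ∃ C : ℝ, C = 1 / (n : ℝ) - 1 / (n + 1) - 1 / 12 * (1 / n) ^ 3 +
      1 / 12 * (1 / (n + 1)) ^ 3 := ⟨_, rfl⟩
    have hA0 : 0 ≤ A := by
      rw [hA, ht]; field_simp; ring_nf; positivity
    have hB0 : 0 ≤ B := by rw [hB]; positivity
    have hfin : 0 ≤ 2 * A - S * B + C := by
      rw [hA, hB, hC, hS, ht]; field_simp; ring_nf; positivity
    have h2 : 2 * A ≤ l * A := mul_le_mul_of_nonneg_right hl hA0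
    have h3 : s * B ≤ S * B := mul_le_mul_of_nonneg_right hu hB0
    have h4 : 0 ≤ l * A - s * B + C := by linarith
    rw [hA, hB, hC] at h4
    have : (n : ℝ) ≠ 0 := by linarith
    have e : l / (n : ℝ) ^ 2 = l * (1 / n) ^ 2 := by ring
    have e2 : l / (n : ℝ) = l * (1 / n) := by ring
    have e3 : (l + s) / ((n : ℝ) + 1) = (l + s) * (1 / (n + 1)) := by ring
    rw [e, e2, e3]
    linarith

theorem tsum_log_sq_div_sq_lower :
    1.98927 < ∑' n : ℕ, Real.log n ^ 2 / (n : ℝ) ^ 2 := by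
  have hs := summable_log_pow_div_sq 2
  have h0 := tendsto_log_pow_div 0
  have h1 := tendsto_log_pow_div 1
  have h2 := tendsto_log_pow_div 2
  simp only [pow_zero, pow_one] at h0 h1
  have key := le_of_tendsto_of_succ_le (N := 10)
    (f := fun n : ℕ => -(∑ k ∈ range n, Real.log k ^ 2 / (k : ℝ) ^ 2 + (Real.log n ^ 2 / n +
      2 * (Real.log n / n) + 2 * (1 / n) +
      1 / 2 * (Real.log n ^ 2 / n * (1 / n)) - 1 / 6 * (Real.log n / n * (1 / n) ^ 2) +
        1 / 6 * (Real.log n ^ 2 / n * (1 / n) ^ 2) - 1 / 150 * (1 / n) ^ 3)))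
    (L := -(∑' n : ℕ, Real.log n ^ 2 / (n : ℝ) ^ 2 + (0 + 2 * 0 + 2 * 0 + 1 / 2 * (0 * 0) -
      1 / 6 * (0 * 0 ^ 2) + 1 / 6 * (0 * 0 ^ 2) - 1 / 150 * 0 ^ 3))) ?_ ?_
  · simp [sum_range_succ] at key
    rw [log_six_eq, Real.log_four_eq, log_eight_eq, log_nine_eq, Real.log_ten_eq] at key
    have a2 := Real.log_two_gt_d9
    have b2 := Real.log_three_gt_d9
    have d2 := Real.log_five_gt_d9
    have e2 := log_seven_bounds.1
    have aa := mul_self_le_mul_self (by norm_num) a2.le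
    have bb := mul_self_le_mul_self (by norm_num) b2.le
    have dd := mul_self_le_mul_self (by norm_num) d2.le
    have ee := mul_self_le_mul_self (by norm_num) e2.le
    have ab := mul_le_mul a2.le b2.le (by norm_num) (by linarith)
    have ad := mul_le_mul a2.le d2.le (by norm_num) (by linarith)
    norm_num at key ⊢
    nlinarith
  · exact (hs.hasSum.tendsto_sum_nat.add ((((((h2.add (h1.const_mul 2)).add (h0.const_mul 2)).add
      ((h2.mul h0).const_mul _)).sub ((h1.mul (h0.pow 2)).const_mul _)).add
      ((h2.mul (h0.pow 2)).const_mul _)).sub ((h0.pow 3).const_mul _))).neg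
  · intro n hn
    have hn0 : (10 : ℝ) ≤ n := by exact_mod_cast hn
    have hl := log_ge_of_ten_le hn
    have hlu := log_le_of_ten_le hn
    have hu := log_one_add_inv_lower (a := n) (by linarith)
    rw [sum_range_succ]
    push_cast
    obtain ⟨l, hl'⟩ : ∃ l, l = Real.log n := ⟨_, rfl⟩
    obtain ⟨s, hs'⟩ : ∃ s, s = Real.log (n + 1) - Real.log n := ⟨_, rfl⟩
    obtain ⟨S, hS⟩ : ∃ S, S = 2 / (2 * (n : ℝ) + 1) + 2 / (3 * (2 * (n : ℝ) + 1) ^ 3) := ⟨_, rfl⟩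
    have hls : Real.log (n + 1) = l + s := by rw [hs', hl']; ring
    rw [← hs', ← hS] at hu
    rw [hls, ← hl']
    rw [← hl'] at hl hlu
    obtain ⟨t, ht⟩ : ∃ t : ℝ, (n : ℝ) = t + 10 := ⟨n - 10, by ring⟩
    have ht0 : 0 ≤ t := by linarith
    have hS0 : 0 < S := by rw [hS]; positivity
    obtain ⟨A, hA⟩ : ∃ A : ℝ, A = 1 / (n : ℝ) - 1 / (n + 1) - 1 / 2 * (1 / n) ^ 2 -
      1 / 2 * (1 / (n + 1)) ^ 2 + 1 / 6 * (1 / n) ^ 3 - 1 / 6 * (1 / (n + 1)) ^ 3 := ⟨_, rfl⟩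
    obtain ⟨K, hK⟩ : ∃ K : ℝ, K = 1 / ((n : ℝ) + 1) + 1 / 2 * (1 / (n + 1)) ^ 2 +
      1 / 6 * (1 / (n + 1)) ^ 3 := ⟨_, rfl⟩
    obtain ⟨M, hM⟩ : ∃ M : ℝ, M = 2 * (1 / ((n : ℝ) + 1)) - 1 / 6 * (1 / (n + 1)) ^ 3 := ⟨_, rfl⟩
    obtain ⟨B, hB⟩ : ∃ B : ℝ, B = 2 * (1 / (n : ℝ)) - 1 / 6 * (1 / n) ^ 3 - M := ⟨_, rfl⟩
    obtain ⟨C, hC⟩ : ∃ C : ℝ, C = 2 * (1 / (n : ℝ)) - 2 * (1 / (n + 1)) -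
      1 / 150 * (1 / n) ^ 3 + 1 / 150 * (1 / (n + 1)) ^ 3 := ⟨_, rfl⟩
    have hA0 : 0 ≤ A := by
      rw [hA, ht]; field_simp; ring_nf; positivity
    have hK0 : 0 ≤ K := by rw [hK]; positivity
    have hM0 : 0 ≤ M := by rw [hM, ht]; field_simp; ring_nf; positivity
    have hB0 : 0 ≤ 2 * S * K - B := by
      rw [hB, hM, hK, hS, ht]; field_simp; ring_nf; positivity
    have hfin : 0 ≤ S ^ 2 * K + S * M - C - (3 / 10 * n) ^ 2 * A := by
      rw [hA, hK, hM, hC, hS, ht]; field_simp; ring_nf; positivity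
    have h2 : l ^ 2 * A ≤ (3 / 10 * n) ^ 2 * A := by gcongr
    have h3 : S * M ≤ s * M := mul_le_mul_of_nonneg_right hu hM0
    have h4 : S ^ 2 * K ≤ s ^ 2 * K := by gcongr
    have h5 : l * (2 * S * K) ≤ l * (2 * s * K) := by gcongr
    have h6 : 0 ≤ l * (2 * S * K - B) := mul_nonneg (by linarith) hB0
    have h7 : l ^ 2 * A + l * B - l * (2 * s * K) - s ^ 2 * K - s * M + C ≤ 0 := by linarith
    rw [hA, hB, hK, hM, hC] at h7
    have : (n : ℝ) ≠ 0 := by linarith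
    have e : l ^ 2 / (n : ℝ) ^ 2 = l ^ 2 * (1 / n) ^ 2 := by ring
    have e1 : l ^ 2 / (n : ℝ) = l ^ 2 * (1 / n) := by ring
    have e2 : l / (n : ℝ) = l * (1 / n) := by ring
    have e3 : (l + s) / ((n : ℝ) + 1) = (l + s) * (1 / (n + 1)) := by ring
    have e4 : (l + s) ^ 2 / ((n : ℝ) + 1) = (l + s) ^ 2 * (1 / (n + 1)) := by ring
    rw [e, e1, e2, e3, e4]
    linarith

theorem harmonic_eq_sum_Ioc (n : ℕ) : (harmonic n : ℝ) = ∑ k ∈ Ioc 0 n, (1 : ℝ) / k := by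
  rw [harmonic_eq_sum_Icc]
  push_cast
  simp only [one_div]
  rfl

theorem sum_ite_mul_le {a N : ℕ} (ha : 0 < a) (f : ℕ → ℝ) :
    ∑ b ∈ Ioc 0 N, (if a * b ≤ N then f b else 0) = ∑ b ∈ Ioc 0 (N / a), f b := by
  rw [← sum_filter]
  congr 1
  ext b
  simp only [mem_filter, mem_Ioc, Nat.le_div_iff_mul_le ha, mul_comm b a]
  constructor
  · rintro ⟨⟨h1, _⟩, h2⟩; exact ⟨h1, h2⟩
  · rintro ⟨h1, h2⟩; exact ⟨⟨h1, (Nat.le_mul_of_pos_left b ha).trans h2⟩, h2⟩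

/-- Dirichlet's hyperbola method for `∑_{ab ≤ N} 1 / (ab)`. -/
theorem sum_harmonic_div_hyperbola (N : ℕ) :
    ∑ a ∈ Ioc 0 N, (1 : ℝ) / a * harmonic (N / a) =
      2 * ∑ a ∈ Ioc 0 N.sqrt, (1 : ℝ) / a * harmonic (N / a) - (harmonic N.sqrt : ℝ) ^ 2 := by
  set m := N.sqrt
  have hm : m * m ≤ N := Nat.sqrt_le N
  have hm' : N < (m + 1) * (m + 1) := Nat.lt_succ_sqrt N
  have hmN : m ≤ N := Nat.sqrt_le_self N
  have row : ∀ a ∈ Ioc 0 N, ∑ b ∈ Ioc 0 N, (if a * b ≤ N then (1 : ℝ) / a * (1 / b) else 0) =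
      1 / a * harmonic (N / a) := by
    intro a ha
    rw [sum_ite_mul_le (mem_Ioc.mp ha).1, ← mul_sum, harmonic_eq_sum_Ioc]
  have sub : ∀ g : ℕ → ℝ, ∑ a ∈ Ioc 0 N, (if a ≤ m then g a else 0) = ∑ a ∈ Ioc 0 m, g a := by
    intro g
    rw [← sum_filter]
    congr 1
    ext a
    simp only [mem_filter, mem_Ioc]
    omega
  have left : ∑ a ∈ Ioc 0 N, ∑ b ∈ Ioc 0 N,
      (if a ≤ m then if a * b ≤ N then (1 : ℝ) / a * (1 / b) else 0 else 0) =
      ∑ a ∈ Ioc 0 m, (1 : ℝ) / a * harmonic (N / a) := by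
    rw [← sub]
    refine sum_congr rfl fun a ha => ?_
    split_ifs
    · exact row a ha
    · simp
  have right : ∑ a ∈ Ioc 0 N, ∑ b ∈ Ioc 0 N,
      (if b ≤ m then if a * b ≤ N then (1 : ℝ) / a * (1 / b) else 0 else 0) =
      ∑ a ∈ Ioc 0 m, (1 : ℝ) / a * harmonic (N / a) := by
    rw [sum_comm, ← left]
    refine sum_congr rfl fun a _ => sum_congr rfl fun b _ => ?_
    rw [mul_comm b a, mul_comm (1 / (b : ℝ))]
  have both : ∑ a ∈ Ioc 0 N, ∑ b ∈ Ioc 0 N,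
      (if a ≤ m then if b ≤ m then (1 : ℝ) / a * (1 / b) else 0 else 0) =
      (harmonic m : ℝ) ^ 2 := by
    rw [harmonic_eq_sum_Ioc, sq, sum_mul_sum, ← sub]
    refine sum_congr rfl fun a _ => ?_
    split_ifs
    · exact sub _
    · simp
  rw [← sum_congr rfl row, two_mul]
  nth_rewrite 1 [← left]
  rw [← right, ← both, ← sum_add_distrib, ← sum_sub_distrib]
  refine sum_congr rfl fun a _ => ?_
  rw [← sum_add_distrib, ← sum_sub_distrib]
  refine sum_congr rfl fun b _ => ?_
  by_cases h1 : a ≤ m <;> by_cases h2 : b ≤ m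
  · have : a * b ≤ N := (Nat.mul_le_mul h1 h2).trans hm
    simp [h1, h2, this]
  · simp [h1, h2]
  · simp [h1, h2]
  · have : ¬ a * b ≤ N := by
      have := Nat.mul_le_mul (not_le.mp h1) (not_le.mp h2)
      simp only [Nat.succ_eq_add_one] at this
      omega
    simp [h1, h2, this]

theorem harmonic_sub_log_le_half {n : ℕ} (hn : 1 ≤ n) :
    harmonic n - Real.log n - Real.eulerMascheroniConstant ≤ 1 / (2 * n) := by
  have hn0 : (1 : ℝ) ≤ n := by exact_mod_cast hn
  have h := harmonic_sub_log_upper hn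
  have : 1 / (60 * (n : ℝ) ^ 4) ≤ 1 / (12 * (n : ℝ) ^ 2) := by
    apply one_div_le_one_div_of_le (by positivity)
    nlinarith [mul_self_nonneg ((n : ℝ) ^ 2 - 1)]
  linarith

theorem abs_harmonic_floor_sub_log_le {t : ℝ} (ht : 1 ≤ t) :
    |harmonic ⌊t⌋₊ - Real.log t - Real.eulerMascheroniConstant| ≤
      1 / (2 * t) + 1 / (12 * t ^ 2) := by
  obtain ⟨n, hn⟩ : ∃ n, n = ⌊t⌋₊ := ⟨_, rfl⟩
  have hn1 : 1 ≤ n := by rw [hn]; exact Nat.le_floor (by simpa using ht)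
  have hn0 : (1 : ℝ) ≤ n := by exact_mod_cast hn1
  have hnt : (n : ℝ) ≤ t := by rw [hn]; exact Nat.floor_le (by linarith)
  have htn : t < n + 1 := by rw [hn]; exact Nat.lt_floor_add_one t
  have ht0 : 0 < t := by linarith
  rw [← hn, abs_le]
  constructor
  · have h := harmonic_sub_log_lower (n := n + 1) (by omega)
    rw [harmonic_succ] at h
    push_cast at h
    have h2 : Real.log t ≤ Real.log (n + 1) := Real.log_le_log ht0 htn.le
    have h3 : 1 / (12 * ((n : ℝ) + 1) ^ 2) ≤ 1 / (12 * t ^ 2) := by gcongr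
    have h4 : 1 / (2 * ((n : ℝ) + 1)) ≤ 1 / (2 * t) := by gcongr
    have e5 : ((n : ℝ) + 1)⁻¹ = 1 / (2 * (n + 1)) + 1 / (2 * (n + 1)) := by field_simp; norm_num
    linarith
  · have h := harmonic_sub_log_le_half hn1
    have h2 := Real.one_sub_inv_le_log_of_pos (x := t / n) (by positivity)
    rw [Real.log_div (by positivity) (by positivity), inv_div] at h2
    have h4 : 1 / (2 * n) - 1 / (2 * t) ≤ 1 - n / t := by
      have e : 1 / (2 * n) - 1 / (2 * t) = (1 - n / t) * (1 / (2 * n)) := by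
        field_simp
      rw [e]
      have : 1 / (2 * (n : ℝ)) ≤ 1 := by rw [div_le_one (by positivity)]; linarith
      have : 0 ≤ 1 - n / t := by
        rw [sub_nonneg, div_le_one (by positivity)]; exact hnt
      nlinarith
    have : 0 ≤ 1 / (12 * t ^ 2) := by positivity
    linarith

/-- The remainder of `∑_{k ≤ u} log (u / k) / k`, for real `u`. -/
theorem log_harmonic_remainder {Q : ℝ} (hQ : ∀ n : ℕ, 1 ≤ n →
    logHarmonicSeq n ≤ Q ∧ Q ≤ logHarmonicSeq n + 1 / (12 * (n : ℝ) ^ 2))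
    {u : ℝ} (hu : 1 ≤ u) {n : ℕ} (hn : n = ⌊u⌋₊) {r : ℝ}
    (hr : r = Real.log u * harmonic n - ∑ k ∈ Ioc 0 n, Real.log k / k - 1 / 2 * Real.log u ^ 2 -
      Real.eulerMascheroniConstant * Real.log u - Q) :
    -(1 / (12 * (n : ℝ) ^ 2)) ≤ r ∧ r ≤ 1 / (8 * (n : ℝ) ^ 2) := by
  have hn1 : 1 ≤ n := by rw [hn]; exact Nat.le_floor (by simpa using hu)
  have hn0 : (1 : ℝ) ≤ n := by exact_mod_cast hn1
  have hnt : (n : ℝ) ≤ u := by rw [hn]; exact Nat.floor_le (by linarith)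
  have htn : u < n + 1 := by rw [hn]; exact Nat.lt_floor_add_one u
  have h1 : Real.log n ≤ Real.log u := Real.log_le_log (by linarith) hnt
  have h2 : Real.log u ≤ Real.log (n + 1) := Real.log_le_log (by linarith) htn.le
  have h3 := half_log_sub_log_le hn1
  have h4 := harmonic_sub_log_le_half hn1
  obtain ⟨h5, h6⟩ := hQ n hn1
  set h := (harmonic n : ℝ) - Real.log n - Real.eulerMascheroniConstant with hh
  set s := Real.log u - Real.log n with hs
  have e : r = logHarmonicSeq n - Q + s * (h - 1 / 2 * s) := by
    rw [hr, hs, hh]; unfold logHarmonicSeq; ring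
  have hlow : 0 ≤ s * (h - 1 / 2 * s) := mul_nonneg (by linarith) (by linarith)
  have hup : s * (h - 1 / 2 * s) ≤ 1 / 2 * h ^ 2 := by nlinarith [sq_nonneg (s - h)]
  have hsq : h ^ 2 ≤ (1 / (2 * (n : ℝ))) ^ 2 := pow_le_pow_left₀ (by linarith) h4 2
  have e2 : 1 / (8 * (n : ℝ) ^ 2) = 1 / 2 * (1 / (2 * (n : ℝ))) ^ 2 := by field_simp; norm_num
  constructor
  · linarith
  · rw [e2]; linarith

theorem abs_hyperbola_error_le {m u S r h : ℝ} (hm0 : 1 ≤ m) (hmu : m ≤ u) (hum : u < m + 1)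
    (hS : |S| ≤ m / (2 * u ^ 2) + m * (m + 1) / (24 * u ^ 4))
    (hr1 : -(1 / (12 * m ^ 2)) ≤ r) (hr2 : r ≤ 1 / (8 * m ^ 2))
    (hh : |h| ≤ 1 / (2 * u) + 1 / (12 * u ^ 2)) :
    |2 * S + 2 * r - h ^ 2| ≤ 1 / u + 7 / 10 / u ^ 2 := by
  have hu : 1 ≤ u := by linarith
  have hu0 : 0 < u := by linarith
  have hsq : h ^ 2 ≤ 0.3404 / u ^ 2 := by
    have h1 : |h| ≤ 7 / 12 / u := by
      refine hh.trans ?_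
      have : 1 / (12 * u ^ 2) ≤ 1 / (12 * u) := by
        apply one_div_le_one_div_of_le (by positivity); nlinarith
      have e : 7 / 12 / u = 1 / (2 * u) + 1 / (12 * u) := by field_simp; norm_num
      linarith
    have h2 := pow_le_pow_left₀ (abs_nonneg _) h1 2
    rw [sq_abs] at h2
    refine h2.trans ?_
    rw [div_pow]
    gcongr
    norm_num
  have hA : m * (m + 1) / (24 * u ^ 4) ≤ 1 / 12 / u ^ 2 := by
    have : m * (m + 1) ≤ u * (2 * u) := by
      apply mul_le_mul hmu <;> linarith
    rw [div_le_div_iff₀ (by positivity) (by positivity)]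
    nlinarith [sq_nonneg u]
  obtain ⟨ρ, hρ⟩ : ∃ ρ, u = m * ρ := ⟨u / m, by field_simp⟩
  have hρ1 : 1 ≤ ρ := by nlinarith
  have hρ2 : ρ ≤ 2 := by nlinarith
  have hρ3 : ρ ≤ 3 := by linarith
  have hρ5 : ρ ≤ 5 := by linarith
  have hgap : ρ - 1 ≤ u - m := by nlinarith
  have e1 : 1 / (8 * m ^ 2) = ρ ^ 2 / 8 / u ^ 2 := by rw [hρ]; field_simp
  have e2 : 1 / (12 * m ^ 2) = ρ ^ 2 / 12 / u ^ 2 := by rw [hρ]; field_simp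
  have e3 : m / (2 * u ^ 2) = m / 2 / u ^ 2 := by field_simp
  have e4 : 1 / u = u / u ^ 2 := by field_simp
  rw [e1] at hr2
  rw [e2] at hr1
  rw [e3] at hS
  rw [abs_le] at hS ⊢
  have hsq0 := sq_nonneg h
  have up : 2 * (m / 2 / u ^ 2 + 1 / 12 / u ^ 2) + 2 * (ρ ^ 2 / 8 / u ^ 2) ≤
      u / u ^ 2 + 7 / 10 / u ^ 2 := by
    have : 2 * (m / 2 + 1 / 12) + 2 * (ρ ^ 2 / 8) ≤ u + 7 / 10 := by
      nlinarith [mul_nonneg (sub_nonneg.2 hρ1) (sub_nonneg.2 hρ3)]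
    have := div_le_div_of_nonneg_right this (sq_nonneg u)
    calc _ = (2 * (m / 2 + 1 / 12) + 2 * (ρ ^ 2 / 8)) / u ^ 2 := by ring
      _ ≤ _ := this
      _ = _ := by ring
  have low : 2 * (m / 2 / u ^ 2 + 1 / 12 / u ^ 2) + 2 * (ρ ^ 2 / 12 / u ^ 2) + 0.3404 / u ^ 2 ≤
      u / u ^ 2 + 7 / 10 / u ^ 2 := by
    have : 2 * (m / 2 + 1 / 12) + 2 * (ρ ^ 2 / 12) + 0.3404 ≤ u + 7 / 10 := by
      nlinarith [mul_nonneg (sub_nonneg.2 hρ1) (sub_nonneg.2 hρ5)]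
    have := div_le_div_of_nonneg_right this (sq_nonneg u)
    calc _ = (2 * (m / 2 + 1 / 12) + 2 * (ρ ^ 2 / 12) + 0.3404) / u ^ 2 := by ring
      _ ≤ _ := this
      _ = _ := by ring
  rw [e4]
  constructor <;> linarith

theorem divisor_sum_bound {Q : ℝ} (hQ : ∀ n : ℕ, 1 ≤ n →
    logHarmonicSeq n ≤ Q ∧ Q ≤ logHarmonicSeq n + 1 / (12 * (n : ℝ) ^ 2))
    {u : ℝ} (hu : 1 ≤ u) {N : ℕ} (hN : N = ⌊u ^ 2⌋₊) :
    |∑ a ∈ Ioc 0 N, (1 : ℝ) / a * harmonic (N / a) -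
      (2 * Real.log u ^ 2 + 4 * Real.eulerMascheroniConstant * Real.log u +
        (Real.eulerMascheroniConstant ^ 2 + 2 * Q))| ≤ 1 / u + 7 / 10 / u ^ 2 := by
  have hu0 : 0 < u := by linarith
  obtain ⟨m, hm⟩ : ∃ m, m = ⌊u⌋₊ := ⟨_, rfl⟩
  have hm1 : 1 ≤ m := by rw [hm]; exact Nat.le_floor (by simpa using hu)
  have hm0 : (1 : ℝ) ≤ m := by exact_mod_cast hm1
  have hmu : (m : ℝ) ≤ u := by rw [hm]; exact Nat.floor_le (by linarith)
  have hum : u < m + 1 := by rw [hm]; exact Nat.lt_floor_add_one u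
  have hsqrt : N.sqrt = m := by
    rw [eq_comm, Nat.eq_sqrt]
    constructor
    · rw [hN]; apply Nat.le_floor; push_cast; nlinarith
    · rw [hN, Nat.floor_lt (by positivity)]; push_cast; nlinarith
  rw [sum_harmonic_div_hyperbola, hsqrt]
  obtain ⟨r, hr⟩ : ∃ r, r = Real.log u * harmonic m - ∑ k ∈ Ioc 0 m, Real.log k / k -
    1 / 2 * Real.log u ^ 2 - Real.eulerMascheroniConstant * Real.log u - Q := ⟨_, rfl⟩
  obtain ⟨hr1, hr2⟩ := log_harmonic_remainder hQ hu hm hr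
  have heps := abs_harmonic_floor_sub_log_le hu
  rw [← hm] at heps
  obtain ⟨ε, hε⟩ : ∃ ε : ℕ → ℝ, ∀ a, ε a = harmonic (N / a) - Real.log (u ^ 2 / a) -
    Real.eulerMascheroniConstant := ⟨fun a => _, fun a => rfl⟩
  have hεa : ∀ a ∈ Ioc 0 m, |1 / (a : ℝ) * ε a| ≤ 1 / (2 * u ^ 2) + a / (12 * u ^ 4) := by
    intro a ha
    rw [mem_Ioc] at ha
    have ha0 : (0 : ℝ) < a := by exact_mod_cast ha.1
    have ham : (a : ℝ) ≤ m := by exact_mod_cast ha.2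
    have h1 : 1 ≤ u ^ 2 / a := by rw [le_div_iff₀ ha0]; nlinarith
    have h := abs_harmonic_floor_sub_log_le h1
    rw [Nat.floor_div_natCast, ← hN, ← hε] at h
    rw [abs_mul, abs_of_pos (by positivity)]
    calc 1 / (a : ℝ) * |ε a| ≤ 1 / a * (1 / (2 * (u ^ 2 / a)) + 1 / (12 * (u ^ 2 / a) ^ 2)) := by
          gcongr
      _ = _ := by field_simp
  have hsum : |∑ a ∈ Ioc 0 m, 1 / (a : ℝ) * ε a| ≤
      m / (2 * u ^ 2) + m * (m + 1) / (24 * u ^ 4) := by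
    refine (abs_sum_le_sum_abs _ _).trans ((sum_le_sum hεa).trans (le_of_eq ?_))
    rw [sum_add_distrib, ← sum_div (Ioc 0 m) (fun a : ℕ => (a : ℝ))]
    have e : ∑ a ∈ Ioc 0 m, (a : ℝ) = m * (m + 1) / 2 := by
      clear * -
      induction m with
      | zero => simp
      | succ k ih => rw [sum_Ioc_succ_top (by omega), ih]; push_cast; ring
    rw [e]
    simp
    field_simp
    ring
  have hid : ∑ a ∈ Ioc 0 m, (1 : ℝ) / a * harmonic (N / a) =
      (2 * Real.log u + Real.eulerMascheroniConstant) * harmonic m -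
        ∑ k ∈ Ioc 0 m, Real.log k / k + ∑ a ∈ Ioc 0 m, 1 / (a : ℝ) * ε a := by
    rw [harmonic_eq_sum_Ioc m, mul_sum, ← sum_sub_distrib, ← sum_add_distrib]
    refine sum_congr rfl fun a ha => ?_
    rw [mem_Ioc] at ha
    have ha0 : (0 : ℝ) < a := by exact_mod_cast ha.1
    rw [hε, Real.log_div (by positivity) (by positivity), Real.log_pow]
    push_cast
    field_simp
    ring
  rw [hid]
  convert abs_hyperbola_error_le hm0 hmu hum hsum hr1 hr2 heps using 2
  rw [hr]
  ring

/-- The arithmetic function `n ↦ 1 / n`. -/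
noncomputable def invArith : ArithmeticFunction ℝ := ⟨fun n => 1 / (n : ℝ), by simp⟩

/-- The arithmetic function `n ↦ 2 ^ ω(n) / n`. -/
noncomputable def twoPowOmegaDiv : ArithmeticFunction ℝ :=
  ⟨fun n => (2 : ℝ) ^ n.primeFactors.card / n, by simp⟩

/-- The arithmetic function supported on squares with `k ^ 2 ↦ μ(k) / k ^ 2`. -/
noncomputable def moebiusSqDiv : ArithmeticFunction ℝ :=
  ⟨fun n => if IsSquare n then (ArithmeticFunction.moebius n.sqrt : ℝ) / n else 0, by simp⟩

theorem invArith_apply (n : ℕ) : invArith n = 1 / (n : ℝ) := rfl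

theorem twoPowOmegaDiv_apply (n : ℕ) :
    twoPowOmegaDiv n = (2 : ℝ) ^ n.primeFactors.card / n := rfl

theorem moebiusSqDiv_apply (n : ℕ) : moebiusSqDiv n =
    if IsSquare n then (ArithmeticFunction.moebius n.sqrt : ℝ) / n else 0 := rfl

theorem moebiusSqDiv_sq (k : ℕ) :
    moebiusSqDiv (k ^ 2) = (ArithmeticFunction.moebius k : ℝ) / (k : ℝ) ^ 2 := by
  rw [moebiusSqDiv_apply, if_pos (IsSquare.sq k), Nat.sqrt_eq']
  push_cast
  rfl

theorem moebiusSqDiv_of_not_isSquare {n : ℕ} (h : ¬ IsSquare n) : moebiusSqDiv n = 0 := by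
  rw [moebiusSqDiv_apply, if_neg h]

theorem isMultiplicative_invArith : invArith.IsMultiplicative := by
  refine ⟨by simp [invArith_apply], fun {m n} _ => ?_⟩
  simp only [invArith_apply]
  push_cast
  rw [one_div_mul_one_div]

theorem isMultiplicative_twoPowOmegaDiv : twoPowOmegaDiv.IsMultiplicative := by
  refine ⟨by simp [twoPowOmegaDiv_apply], fun {m n} h => ?_⟩
  simp only [twoPowOmegaDiv_apply]
  rw [h.primeFactors_mul, card_union_of_disjoint h.disjoint_primeFactors, pow_add]
  push_cast
  rw [div_mul_div_comm]

theorem isMultiplicative_moebiusSqDiv : moebiusSqDiv.IsMultiplicative := by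
  refine ⟨by simpa using moebiusSqDiv_sq 1, fun {m n} h => ?_⟩
  by_cases hmn : IsSquare (m * n)
  · obtain ⟨c, hc⟩ := isSquare_iff_exists_sq _ |>.1 hmn
    obtain ⟨a, rfl⟩ := exists_eq_pow_of_mul_eq_pow (Nat.isUnit_iff.2 h) hc
    obtain ⟨b, rfl⟩ := exists_eq_pow_of_mul_eq_pow (Nat.isUnit_iff.2 h.symm)
      ((mul_comm _ _).trans hc)
    have hab : a.Coprime b := by
      rwa [Nat.coprime_pow_left_iff two_pos, Nat.coprime_pow_right_iff two_pos] at h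
    rw [← mul_pow, moebiusSqDiv_sq, moebiusSqDiv_sq, moebiusSqDiv_sq,
      ArithmeticFunction.isMultiplicative_moebius.map_mul_of_coprime hab]
    push_cast
    ring
  · rw [moebiusSqDiv_of_not_isSquare hmn]
    by_cases hm : IsSquare m
    · have hn : ¬ IsSquare n := fun hn => hmn (hm.mul hn)
      rw [moebiusSqDiv_of_not_isSquare hn, mul_zero]
    · rw [moebiusSqDiv_of_not_isSquare hm, zero_mul]

theorem mul_apply_prime_pow (f g : ArithmeticFunction ℝ) {p : ℕ} (hp : p.Prime) (k : ℕ) :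
    (f * g) (p ^ k) = ∑ i ∈ range (k + 1), f (p ^ i) * g (p ^ (k - i)) := by
  rw [ArithmeticFunction.mul_apply, Nat.sum_divisorsAntidiagonal fun i j => f i * g j,
    Nat.sum_divisors_prime_pow hp]
  refine sum_congr rfl fun i hi => ?_
  rw [Nat.pow_div (by simpa [Nat.lt_succ_iff] using hi) hp.pos]

theorem invArith_mul_self_prime_pow {p : ℕ} (hp : p.Prime) (k : ℕ) :
    (invArith * invArith) (p ^ k) = (k + 1) / (p : ℝ) ^ k := by
  have hp0 : (0 : ℝ) < p := by exact_mod_cast hp.pos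
  rw [mul_apply_prime_pow _ _ hp]
  have : ∀ i ∈ range (k + 1), invArith (p ^ i) * invArith (p ^ (k - i)) = 1 / (p : ℝ) ^ k := by
    intro i hi
    have hik : i ≤ k := by simpa [Nat.lt_succ_iff] using hi
    simp only [invArith_apply]
    push_cast
    rw [one_div_mul_one_div, ← pow_add, Nat.add_sub_cancel' hik]
  rw [sum_congr rfl this]
  simp
  field_simp

theorem moebiusSqDiv_prime_pow {p : ℕ} (hp : p.Prime) {i : ℕ} (h0 : i ≠ 0) (h2 : i ≠ 2) :
    moebiusSqDiv (p ^ i) = 0 := by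
  rcases Nat.even_or_odd' i with ⟨j, rfl | rfl⟩
  · rw [mul_comm, pow_mul, moebiusSqDiv_sq,
      ArithmeticFunction.moebius_apply_prime_pow hp (by omega), if_neg (by omega)]
    simp
  · apply moebiusSqDiv_of_not_isSquare
    rintro ⟨a, ha⟩
    have := congrArg (fun n => n.factorization p) ha
    have ha0 : a ≠ 0 := by rintro rfl; simp [hp.ne_zero] at ha
    simp [hp.factorization_self, Nat.factorization_mul ha0 ha0] at this
    omega

theorem twoPowOmegaDiv_eq : twoPowOmegaDiv = moebiusSqDiv * (invArith * invArith) := by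
  have hinv := isMultiplicative_invArith.mul isMultiplicative_invArith
  rw [isMultiplicative_twoPowOmegaDiv.eq_iff_eq_on_prime_powers _ _
    (isMultiplicative_moebiusSqDiv.mul hinv)]
  intro p k hp
  have hp0 : (0 : ℝ) < p := by exact_mod_cast hp.pos
  rw [mul_apply_prime_pow _ _ hp]
  simp only [invArith_mul_self_prime_pow hp]
  have hone : moebiusSqDiv p = 0 := by
    simpa using moebiusSqDiv_prime_pow hp one_ne_zero (by norm_num)
  have hzero : moebiusSqDiv (p ^ 0) = 1 := by simpa using moebiusSqDiv_sq 1
  rcases k with _ | _ | k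
  · simp [twoPowOmegaDiv_apply]
    simpa using hzero.symm
  · simp only [zero_add, sum_range_succ, range_zero, sum_empty, hzero,
      hone, twoPowOmegaDiv_apply, pow_one,
      hp.primeFactors]
    simp
    norm_num
  · rw [twoPowOmegaDiv_apply, Nat.primeFactors_prime_pow (by omega) hp, card_singleton,
      sum_eq_add_of_mem 0 2 (by simp) (by simp) (by norm_num)]
    · rw [hzero, moebiusSqDiv_sq, ArithmeticFunction.moebius_apply_prime hp]
      simp only [Nat.sub_zero]
      push_cast
      field_simp
      ring
    · intro i _ hi
      rw [moebiusSqDiv_prime_pow hp hi.1 hi.2, zero_mul]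

theorem sum_moebiusSqDiv_mul (N : ℕ) (g : ℕ → ℝ) :
    ∑ n ∈ Ioc 0 N, moebiusSqDiv n * g n = ∑ k ∈ Ioc 0 N.sqrt,
      (ArithmeticFunction.moebius k : ℝ) / (k : ℝ) ^ 2 * g (k ^ 2) := by
  have hinj : Set.InjOn (fun k : ℕ => k ^ 2) (Ioc 0 N.sqrt) := fun a _ b _ h => by simpa using h
  rw [← sum_subset (s₁ := (Ioc 0 N.sqrt).image fun k => k ^ 2), sum_image hinj]
  · exact sum_congr rfl fun k _ => by rw [moebiusSqDiv_sq]
  · intro n hn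
    obtain ⟨k, hk, rfl⟩ := mem_image.1 hn
    rw [mem_Ioc] at hk ⊢
    exact ⟨pow_pos hk.1 2, Nat.le_sqrt'.1 hk.2⟩
  · intro n hn hn'
    rw [moebiusSqDiv_of_not_isSquare, zero_mul]
    rintro ⟨k, rfl⟩
    rw [mem_Ioc] at hn
    refine hn' (mem_image.2 ⟨k, mem_Ioc.2 ⟨?_, Nat.le_sqrt.2 hn.2⟩, sq k⟩)
    by_contra h
    simp_all

theorem sum_two_pow_omega_div (N : ℕ) :
    ∑ n ∈ Icc 1 N, (2 : ℝ) ^ n.primeFactors.card / n = ∑ k ∈ Ioc 0 N.sqrt,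
      (ArithmeticFunction.moebius k : ℝ) / (k : ℝ) ^ 2 *
        ∑ a ∈ Ioc 0 (N / k ^ 2), (1 : ℝ) / a * harmonic (N / k ^ 2 / a) := by
  have h1 : ∑ n ∈ Icc 1 N, (2 : ℝ) ^ n.primeFactors.card / n =
      ∑ n ∈ Ioc 0 N, twoPowOmegaDiv n := rfl
  rw [h1, twoPowOmegaDiv_eq, ArithmeticFunction.sum_Ioc_mul_eq_sum_sum, sum_moebiusSqDiv_mul]
  refine sum_congr rfl fun k _ => ?_
  rw [ArithmeticFunction.sum_Ioc_mul_eq_sum_sum]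
  simp only [harmonic_eq_sum_Ioc, invArith_apply]

theorem LSeries_logMul_iterate_two (f : ℕ → ℝ) (j : ℕ) :
    LSeries (LSeries.logMul^[j] fun n => (f n : ℂ)) 2 =
      ((∑' n : ℕ, f n * Real.log n ^ j / (n : ℝ) ^ 2 : ℝ) : ℂ) := by
  have hiter : ∀ n : ℕ, LSeries.logMul^[j] (fun n => (f n : ℂ)) n =
      Complex.log n ^ j * (f n : ℂ) := by
    intro n
    induction j with
    | zero => simp
    | succ i ih =>
      rw [Function.iterate_succ', Function.comp_apply, LSeries.logMul, ih]
      ring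
  rw [LSeries, Complex.ofReal_tsum]
  refine tsum_congr fun n => ?_
  rcases eq_or_ne n 0 with rfl | hn
  · simp
  · rw [LSeries.term_of_ne_zero hn, hiter]
    push_cast
    rw [mul_comm]
    norm_cast

/-- Differentiating `∑ 1 / n ^ s * ∑ μ(n) / n ^ s = 1` twice. -/
theorem LSeries_one_moebius_derivatives {s : ℂ} (hs : 1 < s.re) {g : ℕ → ℂ}
    (hg : g = fun n => ((ArithmeticFunction.moebius n : ℝ) : ℂ)) :
    LSeries 1 s * LSeries g s = 1 ∧
    LSeries (LSeries.logMul 1) s * LSeries g s + LSeries 1 s * LSeries (LSeries.logMul g) s = 0 ∧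
    LSeries (LSeries.logMul (LSeries.logMul 1)) s * LSeries g s +
      2 * (LSeries (LSeries.logMul 1) s * LSeries (LSeries.logMul g) s) +
      LSeries 1 s * LSeries (LSeries.logMul (LSeries.logMul g)) s = 0 := by
  have hg' : g = fun n => ((ArithmeticFunction.moebius n : ℤ) : ℂ) := by rw [hg]; simp
  have habs1 : LSeries.abscissaOfAbsConv (1 : ℕ → ℂ) = 1 := LSeries.abscissaOfAbsConv_one
  have habsg : LSeries.abscissaOfAbsConv g = 1 := by
    rw [hg']; exact ArithmeticFunction.abscissaOfAbsConv_moebius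
  have hopen : ∀ z : ℂ, 1 < z.re → ∀ᶠ w in 𝓝 z, 1 < w.re := fun z hz =>
    (isOpen_lt continuous_const Complex.continuous_re).mem_nhds hz
  have hre : ∀ z : ℂ, 1 < z.re → (1 : EReal) < z.re := fun z hz => by exact_mod_cast hz
  have zero : ∀ z : ℂ, 1 < z.re → LSeries 1 z * LSeries g z = 1 := fun z hz => by
    rw [hg']; exact LSeries_one_mul_Lseries_moebius hz
  have d1 : ∀ z : ℂ, 1 < z.re → HasDerivAt (LSeries 1) (-LSeries (LSeries.logMul 1) z) z :=
    fun z hz => LSeries_hasDerivAt (by rw [habs1]; exact hre z hz)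
  have dg : ∀ z : ℂ, 1 < z.re → HasDerivAt (LSeries g) (-LSeries (LSeries.logMul g) z) z :=
    fun z hz => LSeries_hasDerivAt (by rw [habsg]; exact hre z hz)
  have d1' : ∀ z : ℂ, 1 < z.re → HasDerivAt (LSeries (LSeries.logMul 1))
      (-LSeries (LSeries.logMul (LSeries.logMul 1)) z) z :=
    fun z hz => LSeries_hasDerivAt (by
      rw [LSeries.abscissaOfAbsConv_logMul, habs1]; exact hre z hz)
  have dg' : ∀ z : ℂ, 1 < z.re → HasDerivAt (LSeries (LSeries.logMul g))
      (-LSeries (LSeries.logMul (LSeries.logMul g)) z) z :=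
    fun z hz => LSeries_hasDerivAt (by
      rw [LSeries.abscissaOfAbsConv_logMul, habsg]; exact hre z hz)
  have one : ∀ z : ℂ, 1 < z.re → LSeries (LSeries.logMul 1) z * LSeries g z +
      LSeries 1 z * LSeries (LSeries.logMul g) z = 0 := fun z hz => by
    have h := (d1 z hz).mul (dg z hz)
    have hc : HasDerivAt (LSeries 1 * LSeries g) 0 z :=
      (hasDerivAt_const z (1 : ℂ)).congr_of_eventuallyEq
        ((hopen z hz).mono fun w hw => zero w hw)
    linear_combination -h.unique hc
  refine ⟨zero s hs, one s hs, ?_⟩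
  have h := ((d1' s hs).mul (dg s hs)).add ((d1 s hs).mul (dg' s hs))
  have hc : HasDerivAt (LSeries (LSeries.logMul 1) * LSeries g +
      LSeries 1 * LSeries (LSeries.logMul g)) 0 s :=
    (hasDerivAt_const s (0 : ℂ)).congr_of_eventuallyEq
      ((hopen s hs).mono fun w hw => one w hw)
  linear_combination -h.unique hc

theorem tsum_moebius_mul_log_pow {S₁ S₂ : ℝ} (hS₁ : S₁ = ∑' n : ℕ, Real.log n / (n : ℝ) ^ 2)
    (hS₂ : S₂ = ∑' n : ℕ, Real.log n ^ 2 / (n : ℝ) ^ 2) :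
    (∑' n : ℕ, (ArithmeticFunction.moebius n : ℝ) / (n : ℝ) ^ 2 = 6 / Real.pi ^ 2) ∧
    (∑' n : ℕ, (ArithmeticFunction.moebius n : ℝ) * Real.log n / (n : ℝ) ^ 2 =
      -S₁ * (6 / Real.pi ^ 2) ^ 2) ∧
    ∑' n : ℕ, (ArithmeticFunction.moebius n : ℝ) * Real.log n ^ 2 / (n : ℝ) ^ 2 =
      -S₂ * (6 / Real.pi ^ 2) ^ 2 + 2 * S₁ ^ 2 * (6 / Real.pi ^ 2) ^ 3 := by
  have hs : 1 < (2 : ℂ).re := by norm_num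
  obtain ⟨h0, h1, h2⟩ := LSeries_one_moebius_derivatives hs rfl
  have e1 : (1 : ℕ → ℂ) = fun n => (((fun _ => 1 : ℕ → ℝ) n : ℝ) : ℂ) := by ext; simp
  have hz : LSeries 1 2 = ((Real.pi ^ 2 / 6 : ℝ) : ℂ) := by
    rw [LSeries_one_eq_riemannZeta hs, riemannZeta_two]; push_cast; rfl
  rw [hz] at h0 h1 h2
  have t1 := LSeries_logMul_iterate_two (fun _ => 1) 1
  have t2 := LSeries_logMul_iterate_two (fun _ => 1) 2
  have m0 := LSeries_logMul_iterate_two (fun n => (ArithmeticFunction.moebius n : ℝ)) 0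
  have m1 := LSeries_logMul_iterate_two (fun n => (ArithmeticFunction.moebius n : ℝ)) 1
  have m2 := LSeries_logMul_iterate_two (fun n => (ArithmeticFunction.moebius n : ℝ)) 2
  rw [← e1] at t1 t2
  simp only [Function.iterate_succ, Function.iterate_zero, Function.comp_apply, id_eq, one_mul,
    pow_one, pow_zero, mul_one] at t1 t2 m0 m1 m2
  rw [t1, m0, m1, ← hS₁] at h1
  rw [t1, t2, m0, m1, m2, ← hS₁, ← hS₂] at h2
  rw [m0] at h0
  have hpi : Real.pi ^ 2 ≠ 0 := by positivity
  set a0 := ∑' n : ℕ, (ArithmeticFunction.moebius n : ℝ) / (n : ℝ) ^ 2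
  set a1 := ∑' n : ℕ, (ArithmeticFunction.moebius n : ℝ) * Real.log n / (n : ℝ) ^ 2
  set a2 := ∑' n : ℕ, (ArithmeticFunction.moebius n : ℝ) * Real.log n ^ 2 / (n : ℝ) ^ 2
  norm_cast at h0 h1 h2
  have hinv : 6 / Real.pi ^ 2 * (Real.pi ^ 2 / 6) = 1 := by field_simp
  have k0 : a0 = 6 / Real.pi ^ 2 := by linear_combination (6 / Real.pi ^ 2) * h0 - a0 * hinv
  rw [← k0] at hinv ⊢
  have k1 : a1 = -S₁ * a0 ^ 2 := by linear_combination a0 * h1 - a1 * hinv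
  refine ⟨rfl, k1, ?_⟩
  rw [k1] at h2
  linear_combination a0 * h2 - a2 * hinv

theorem abs_moebius_real_le_one (n : ℕ) : |(ArithmeticFunction.moebius n : ℝ)| ≤ 1 := by
  exact_mod_cast ArithmeticFunction.abs_moebius_le_one (n := n)

theorem summable_moebius_mul_log_pow (j : ℕ) :
    Summable fun n : ℕ => (ArithmeticFunction.moebius n : ℝ) * Real.log n ^ j / (n : ℝ) ^ 2 := by
  refine Summable.of_norm_bounded (summable_log_pow_div_sq j) fun n => ?_
  have hlog : 0 ≤ Real.log n := Real.log_natCast_nonneg n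
  rw [Real.norm_eq_abs, abs_div, abs_mul, abs_of_nonneg (pow_nonneg hlog j),
    abs_of_nonneg (sq_nonneg (n : ℝ))]
  gcongr
  exact mul_le_of_le_one_left (pow_nonneg hlog j) (abs_moebius_real_le_one n)

theorem tsum_moebius_mul_quadratic (X g c : ℝ) {S₁ S₂ a : ℝ}
    (hS₁ : S₁ = ∑' n : ℕ, Real.log n / (n : ℝ) ^ 2)
    (hS₂ : S₂ = ∑' n : ℕ, Real.log n ^ 2 / (n : ℝ) ^ 2) (ha : a = 6 / Real.pi ^ 2) :
    HasSum (fun n : ℕ => (ArithmeticFunction.moebius n : ℝ) / (n : ℝ) ^ 2 *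
        (2 * (X / 2 - Real.log n) ^ 2 + 4 * g * (X / 2 - Real.log n) + c))
      (a / 2 * X ^ 2 + (2 * g * a + 2 * S₁ * a ^ 2) * X +
        (c * a + 4 * g * S₁ * a ^ 2 - 2 * S₂ * a ^ 2 + 4 * S₁ ^ 2 * a ^ 3)) := by
  obtain ⟨h0, h1, h2⟩ := tsum_moebius_mul_log_pow hS₁ hS₂
  have s0 := (summable_moebius_mul_log_pow 0).hasSum
  have s1 := (summable_moebius_mul_log_pow 1).hasSum
  have s2 := (summable_moebius_mul_log_pow 2).hasSum
  simp only [pow_zero, pow_one, mul_one] at s0 s1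
  rw [h0, ← ha] at s0
  rw [h1, ← ha] at s1
  rw [h2, ← ha] at s2
  convert! ((s0.mul_left (X ^ 2 / 2 + 2 * g * X + c)).sub (s1.mul_left (2 * X + 4 * g))).add
    (s2.mul_left 2) using 1
  · ext n; ring
  · ring

theorem six_div_pi_sq_bounds :
    0.607927 < 6 / Real.pi ^ 2 ∧ 6 / Real.pi ^ 2 < 0.60792711 := by
  have h1 := Real.pi_gt_d20
  have h2 := Real.pi_lt_d20
  constructor
  · rw [lt_div_iff₀ (by positivity)]
    have := pow_lt_pow_left₀ h2 Real.pi_pos.le two_ne_zero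
    norm_num at this ⊢
    linarith
  · rw [div_lt_iff₀ (by positivity)]
    have := pow_lt_pow_left₀ h1 (by norm_num) two_ne_zero
    norm_num at this ⊢
    linarith

theorem linear_coeff_le {a S₁ : ℝ} (ha : a = 6 / Real.pi ^ 2)
    (hS₁ : S₁ = ∑' n : ℕ, Real.log n / (n : ℝ) ^ 2) :
    2 * Real.eulerMascheroniConstant * a + 2 * S₁ * a ^ 2 ≤ 1.3948 := by
  have hγ := eulerMascheroni_upper
  have hS := tsum_log_div_sq_upper
  obtain ⟨h1, h2⟩ := six_div_pi_sq_bounds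
  rw [← hS₁] at hS
  rw [← ha] at h1 h2
  have ha0 : 0 ≤ a := by linarith
  calc 2 * Real.eulerMascheroniConstant * a + 2 * S₁ * a ^ 2
      ≤ 2 * 0.577215676 * 0.60792711 + 2 * 0.93754867 * 0.60792711 ^ 2 := by gcongr
    _ ≤ 1.3948 := by norm_num

theorem constant_coeff_le {a S₁ S₂ Q : ℝ} (ha : a = 6 / Real.pi ^ 2)
    (hS₁ : S₁ = ∑' n : ℕ, Real.log n / (n : ℝ) ^ 2)
    (hS₂ : S₂ = ∑' n : ℕ, Real.log n ^ 2 / (n : ℝ) ^ 2) (hQ : Q ≤ 0.07282) :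
    (Real.eulerMascheroniConstant ^ 2 + 2 * Q) * a +
      4 * Real.eulerMascheroniConstant * S₁ * a ^ 2 - 2 * S₂ * a ^ 2 + 4 * S₁ ^ 2 * a ^ 3 ≤
      0.4107 := by
  have hγ := eulerMascheroni_upper
  have hγ' := eulerMascheroni_lower
  have hS := tsum_log_div_sq_upper
  have hS' := tsum_log_sq_div_sq_lower
  obtain ⟨h1, h2⟩ := six_div_pi_sq_bounds
  have hS0 : 0 ≤ S₁ := by
    rw [hS₁]
    exact tsum_nonneg fun n => div_nonneg (Real.log_natCast_nonneg n) (sq_nonneg _)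
  rw [← hS₁] at hS
  rw [← hS₂] at hS'
  rw [← ha] at h1 h2
  have ha0 : 0 ≤ a := by linarith
  have e1 : (Real.eulerMascheroniConstant ^ 2 + 2 * Q) * a ≤
      (0.577215676 ^ 2 + 2 * 0.07282) * 0.60792711 := by gcongr
  have e2 : 4 * Real.eulerMascheroniConstant * S₁ * a ^ 2 ≤
      4 * 0.577215676 * 0.93754867 * 0.60792711 ^ 2 := by gcongr
  have e3 : 2 * 1.98927 * 0.607927 ^ 2 ≤ 2 * S₂ * a ^ 2 := by gcongr
  have e4 : 4 * S₁ ^ 2 * a ^ 3 ≤ 4 * 0.93754867 ^ 2 * 0.60792711 ^ 3 := by gcongr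
  norm_num at e1 e2 e3 e4 ⊢
  linarith

theorem hasDerivAt_quadratic_log_div (b c r : ℝ) (k : ℕ) {t : ℝ} (ht : 0 < t) :
    HasDerivAt (fun s => (2 * (Real.log s - r) ^ 2 + b * (Real.log s - r) + c) / s ^ k)
      ((4 * (Real.log t - r) + b -
        k * (2 * (Real.log t - r) ^ 2 + b * (Real.log t - r) + c)) / t ^ (k + 1)) t := by
  have hl : HasDerivAt (fun s => Real.log s - r) (t⁻¹) t :=
    (Real.hasDerivAt_log ht.ne').sub_const r
  have h := ((((hl.pow 2).const_mul 2).add (hl.const_mul b)).add_const c).div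
    (hasDerivAt_pow k t) (pow_pos ht k).ne'
  refine h.congr_deriv ?_
  rcases k with _ | k
  · simp
    field_simp
    ring
  · simp only [Pi.pow_apply, Pi.add_apply, Nat.add_sub_cancel]
    push_cast
    field_simp
    ring

theorem antitoneOn_quadratic_log_div_sq {u : ℝ} (hu : 0 < u) :
    AntitoneOn (fun s => (2 * (Real.log s - Real.log u) ^ 2 + -2 * (Real.log s - Real.log u) + 1) /
      s ^ 2) (Set.Ici u) := by
  have hd := fun {t : ℝ} (ht : 0 < t) => hasDerivAt_quadratic_log_div (-2) 1 (Real.log u) 2 ht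
  refine antitoneOn_of_hasDerivWithinAt_nonpos (convex_Ici u)
    (fun t ht => (hd (hu.trans_le ht)).continuousAt.continuousWithinAt)
    (fun t ht => (hd (hu.trans_le (interior_subset ht))).hasDerivWithinAt) fun t ht => ?_
  have ht0 : 0 < t := hu.trans_le (interior_subset ht)
  refine div_nonpos_of_nonpos_of_nonneg ?_ (by positivity)
  push_cast
  nlinarith [sq_nonneg (Real.log t - Real.log u - 1)]

theorem quadratic_log_div_sq_le {u a b : ℝ} (hu : 0 < u) (ha : u ≤ a) (hab : a ≤ b) :
    (2 * (Real.log b - Real.log u) ^ 2 + -2 * (Real.log b - Real.log u) + 1) / b ^ 2 * (b - a) ≤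
      (2 * (Real.log a - Real.log u) ^ 2 + 2 * (Real.log a - Real.log u) + 3) / a ^ 1 -
      (2 * (Real.log b - Real.log u) ^ 2 + 2 * (Real.log b - Real.log u) + 3) / b ^ 1 := by
  set v := (2 * (Real.log b - Real.log u) ^ 2 + -2 * (Real.log b - Real.log u) + 1) / b ^ 2 with hv
  have hd := fun {t : ℝ} (ht : 0 < t) =>
    (hasDerivAt_quadratic_log_div 2 3 (Real.log u) 1 ht).add ((hasDerivAt_id t).const_mul v)
  have hanti := antitoneOn_of_hasDerivWithinAt_nonpos (convex_Icc a b)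
    (fun t ht => (hd (hu.trans_le (ha.trans ht.1))).continuousAt.continuousWithinAt)
    (fun t ht => (hd (hu.trans_le (ha.trans (interior_subset ht).1))).hasDerivWithinAt)
    fun t ht => ?_
  · have h := hanti (Set.left_mem_Icc.2 hab) (Set.right_mem_Icc.2 hab) hab
    simp only [Pi.add_apply, id_eq] at h
    linarith
  · have ht' := interior_subset ht
    have h := antitoneOn_quadratic_log_div_sq hu (ha.trans ht'.1)
      (ha.trans hab) ht'.2
    simp only [← hv] at h
    have e : (4 * (Real.log t - Real.log u) + 2 - ((1 : ℕ) : ℝ) *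
        (2 * (Real.log t - Real.log u) ^ 2 + 2 * (Real.log t - Real.log u) + 3)) / t ^ (1 + 1) =
        -((2 * (Real.log t - Real.log u) ^ 2 + -2 * (Real.log t - Real.log u) + 1) / t ^ 2) := by
      rw [← neg_div]; push_cast; ring
    rw [e]
    linarith

theorem sum_quadratic_log_div_sq_le {u : ℝ} (hu : 0 < u) {m : ℕ} (hum : u ≤ m + 1) (j : ℕ) :
    ∑ k ∈ Ioc m (m + 1 + j),
      (2 * (Real.log k - Real.log u) ^ 2 + -2 * (Real.log k - Real.log u) + 1) / (k : ℝ) ^ 2 ≤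
      1 / u ^ 2 + 3 / u - (2 * (Real.log (m + 1 + j : ℕ) - Real.log u) ^ 2 +
        2 * (Real.log (m + 1 + j : ℕ) - Real.log u) + 3) / ((m + 1 + j : ℕ) : ℝ) ^ 1 := by
  induction j with
  | zero =>
    have hum' : u ≤ ((m + 1 : ℕ) : ℝ) := by push_cast; exact hum
    have h1 := antitoneOn_quadratic_log_div_sq hu Set.self_mem_Ici hum' hum'
    have h2 := quadratic_log_div_sq_le hu le_rfl hum'
    have h3 : 0 ≤ (2 * (Real.log (m + 1 : ℕ) - Real.log u) ^ 2 +
        -2 * (Real.log (m + 1 : ℕ) - Real.log u) + 1) / ((m + 1 : ℕ) : ℝ) ^ 2 *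
        (((m + 1 : ℕ) : ℝ) - u) := by
      refine mul_nonneg (div_nonneg ?_ (sq_nonneg _)) (sub_nonneg.2 hum')
      nlinarith [sq_nonneg (2 * (Real.log (m + 1 : ℕ) - Real.log u) - 1)]
    have h4 := h3.trans h2
    simp only [sub_self] at h1 h4
    rw [add_zero, sum_Ioc_succ_top (by omega), Ioc_self, sum_empty]
    norm_num at h1 h4 ⊢
    linarith
  | succ j ih =>
    have hu' : u ≤ ((m + 1 + j : ℕ) : ℝ) := hum.trans (by push_cast; linarith)
    have hs := quadratic_log_div_sq_le hu hu' (b := ((m + 1 + (j + 1) : ℕ) : ℝ))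
      (by push_cast; linarith)
    have e : ((m + 1 + (j + 1) : ℕ) : ℝ) - ((m + 1 + j : ℕ) : ℝ) = 1 := by push_cast; ring
    rw [e, mul_one] at hs
    rw [← add_assoc, sum_Ioc_succ_top (by omega), add_assoc (m + 1) j 1]
    linarith

theorem abs_quadratic_log_le {L g c : ℝ} (hL : 0 ≤ L) (hg : 0.5 ≤ g) (hg' : g ≤ 0.58)
    (hc : 0.4 ≤ c) (hc' : c ≤ 1) :
    |2 * (-L) ^ 2 + 4 * g * (-L) + c| ≤ 2 * L ^ 2 + -2 * L + 1 := by
  rw [abs_le]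
  constructor
  · nlinarith [sq_nonneg (L - 0.54), mul_nonneg hL (sub_nonneg.2 hg')]
  · nlinarith [mul_nonneg hL (sub_nonneg.2 hg)]

/-- Truncating the series defining the main term. -/
theorem sum_moebius_quadratic_le {u g c M : ℝ} (hu : 0 < u) {m : ℕ} (hum : u ≤ m + 1)
    (hg : 0.5 ≤ g) (hg' : g ≤ 0.58) (hc : 0.4 ≤ c) (hc' : c ≤ 1)
    (hM : HasSum (fun n : ℕ => (ArithmeticFunction.moebius n : ℝ) / (n : ℝ) ^ 2 *
      (2 * (Real.log u - Real.log n) ^ 2 + 4 * g * (Real.log u - Real.log n) + c)) M) :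
    ∑ k ∈ Ioc 0 m, (ArithmeticFunction.moebius k : ℝ) / (k : ℝ) ^ 2 *
      (2 * (Real.log u - Real.log k) ^ 2 + 4 * g * (Real.log u - Real.log k) + c) ≤
      M + (1 / u ^ 2 + 3 / u) := by
  set f := fun n : ℕ => (ArithmeticFunction.moebius n : ℝ) / (n : ℝ) ^ 2 *
    (2 * (Real.log u - Real.log n) ^ 2 + 4 * g * (Real.log u - Real.log n) + c) with hf
  have hf0 : f 0 = 0 := by simp [hf]
  have hrange : ∀ K : ℕ, ∑ n ∈ range (K + 1), f n = ∑ k ∈ Ioc 0 K, f k := by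
    intro K
    rw [sum_range_succ', hf0, add_zero]
    induction K with
    | zero => simp
    | succ K ih => rw [sum_range_succ, ih, sum_Ioc_succ_top (by omega)]
  have htend : Tendsto (fun j => ∑ k ∈ Ioc 0 (m + 1 + j), f k) atTop (𝓝 M) := by
    have h := hM.tendsto_sum_nat.comp (tendsto_add_atTop_nat (m + 2))
    refine h.congr fun j => ?_
    rw [Function.comp_apply, ← hrange]
    congr 2
    omega
  refine ge_of_tendsto (htend.add_const (1 / u ^ 2 + 3 / u)) (Eventually.of_forall fun j => ?_)
  have hsplit : ∑ k ∈ Ioc 0 (m + 1 + j), f k =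
      ∑ k ∈ Ioc 0 m, f k + ∑ k ∈ Ioc m (m + 1 + j), f k :=
    (sum_Ioc_consecutive f (Nat.zero_le m) (by omega)).symm
  have htail : |∑ k ∈ Ioc m (m + 1 + j), f k| ≤ 1 / u ^ 2 + 3 / u := by
    refine (abs_sum_le_sum_abs _ _).trans ((sum_le_sum fun k hk => ?_).trans
      ((sum_quadratic_log_div_sq_le hu hum j).trans (sub_le_self _ ?_)))
    · rw [mem_Ioc] at hk
      have hmk : (m : ℝ) + 1 ≤ k := by exact_mod_cast hk.1
      have hL : 0 ≤ Real.log k - Real.log u :=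
        sub_nonneg.2 (Real.log_le_log hu (hum.trans hmk))
      have hP := abs_quadratic_log_le hL hg hg' hc hc'
      rw [neg_sub] at hP
      rw [hf, abs_mul, abs_div, abs_of_nonneg (sq_nonneg (k : ℝ)), div_mul_eq_mul_div]
      gcongr
      exact (mul_le_of_le_one_left (abs_nonneg _) (abs_moebius_real_le_one k)).trans hP
    · refine div_nonneg ?_ (by positivity)
      nlinarith [sq_nonneg (2 * (Real.log (m + 1 + j : ℕ) - Real.log u) + 1)]
  have := (abs_le.1 htail).1
  rw [hsplit]
  linarith

/-- Replacing the inner divisor sums by their main terms. -/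
theorem sum_moebius_divisor_sum_le {Q : ℝ} (hQ : ∀ n : ℕ, 1 ≤ n →
    logHarmonicSeq n ≤ Q ∧ Q ≤ logHarmonicSeq n + 1 / (12 * (n : ℝ) ^ 2))
    {u : ℝ} (hu : 1 ≤ u) :
    ∑ n ∈ Icc 1 ⌊u ^ 2⌋₊, (2 : ℝ) ^ n.primeFactors.card / n ≤
      ∑ k ∈ Ioc 0 ⌊u⌋₊, (ArithmeticFunction.moebius k : ℝ) / (k : ℝ) ^ 2 *
        (2 * (Real.log u - Real.log k) ^ 2 +
          4 * Real.eulerMascheroniConstant * (Real.log u - Real.log k) +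
          (Real.eulerMascheroniConstant ^ 2 + 2 * Q)) +
      (harmonic ⌊u⌋₊ + 7 / 10) / u := by
  have hu0 : 0 < u := by linarith
  obtain ⟨m, hm⟩ : ∃ m, m = ⌊u⌋₊ := ⟨_, rfl⟩
  have hmu : (m : ℝ) ≤ u := by rw [hm]; exact Nat.floor_le (by linarith)
  have hum : u < m + 1 := by rw [hm]; exact Nat.lt_floor_add_one u
  have hsqrt : ⌊u ^ 2⌋₊.sqrt = m := by
    rw [eq_comm, Nat.eq_sqrt]
    constructor
    · apply Nat.le_floor; push_cast; nlinarith
    · rw [Nat.floor_lt (by positivity)]; push_cast; nlinarith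
  rw [sum_two_pow_omega_div, hsqrt, ← hm]
  have hterm : ∀ k ∈ Ioc 0 m, (ArithmeticFunction.moebius k : ℝ) / (k : ℝ) ^ 2 *
      ∑ a ∈ Ioc 0 (⌊u ^ 2⌋₊ / k ^ 2), (1 : ℝ) / a * harmonic (⌊u ^ 2⌋₊ / k ^ 2 / a) ≤
      (ArithmeticFunction.moebius k : ℝ) / (k : ℝ) ^ 2 * (2 * (Real.log u - Real.log k) ^ 2 +
          4 * Real.eulerMascheroniConstant * (Real.log u - Real.log k) +
          (Real.eulerMascheroniConstant ^ 2 + 2 * Q)) + (1 / u * (1 / k) + 7 / 10 / u ^ 2) := by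
    intro k hk
    rw [mem_Ioc] at hk
    have hk0 : (0 : ℝ) < k := by exact_mod_cast hk.1
    have hkm : (k : ℝ) ≤ m := by exact_mod_cast hk.2
    have hN : ⌊u ^ 2⌋₊ / k ^ 2 = ⌊(u / k) ^ 2⌋₊ := by
      rw [div_pow, ← Nat.cast_pow, Nat.floor_div_natCast]
    have h := divisor_sum_bound hQ ((one_le_div hk0).2 (hkm.trans hmu)) hN
    rw [Real.log_div hu0.ne' hk0.ne'] at h
    set D := ∑ a ∈ Ioc 0 (⌊u ^ 2⌋₊ / k ^ 2), (1 : ℝ) / a * harmonic (⌊u ^ 2⌋₊ / k ^ 2 / a)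
    set P := 2 * (Real.log u - Real.log k) ^ 2 +
      4 * Real.eulerMascheroniConstant * (Real.log u - Real.log k) +
      (Real.eulerMascheroniConstant ^ 2 + 2 * Q)
    have hμ : (ArithmeticFunction.moebius k : ℝ) * (D - P) ≤
        1 / (u / k) + 7 / 10 / (u / k) ^ 2 := by
      refine (le_abs_self _).trans ?_
      rw [abs_mul]
      exact (mul_le_of_le_one_left (abs_nonneg _) (abs_moebius_real_le_one k)).trans h
    have hdiv := div_le_div_of_nonneg_right hμ (sq_nonneg (k : ℝ))
    have e1 : (1 / (u / k) + 7 / 10 / (u / k) ^ 2) / (k : ℝ) ^ 2 =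
        1 / u * (1 / k) + 7 / 10 / u ^ 2 := by field_simp
    have e2 : (ArithmeticFunction.moebius k : ℝ) * (D - P) / (k : ℝ) ^ 2 =
        (ArithmeticFunction.moebius k : ℝ) / (k : ℝ) ^ 2 * D -
        (ArithmeticFunction.moebius k : ℝ) / (k : ℝ) ^ 2 * P := by ring
    rw [e1, e2] at hdiv
    linarith
  refine (sum_le_sum hterm).trans ?_
  rw [sum_add_distrib, sum_add_distrib, ← mul_sum, ← harmonic_eq_sum_Ioc]
  simp only [sum_const, Nat.card_Ioc, Nat.sub_zero, nsmul_eq_mul]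
  have h7 : (m : ℝ) * (7 / 10 / u ^ 2) ≤ 7 / 10 / u := by
    calc (m : ℝ) * (7 / 10 / u ^ 2) ≤ u * (7 / 10 / u ^ 2) := by gcongr
      _ = 7 / 10 / u := by field_simp
  have e : (harmonic m + 7 / 10 : ℝ) / u = 1 / u * harmonic m + 7 / 10 / u := by ring
  rw [e]
  linarith

theorem error_term_le {v : ℝ} (hv : 10 ≤ v ^ 3) (hv0 : 0 < v) :
    Real.log (v ^ 3) + 4.43 ≤ 3.253 * v := by
  have hv1 : 2.15 ≤ v := by
    by_contra h
    have := pow_lt_pow_left₀ (not_le.1 h) hv0.le three_ne_zero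
    norm_num at this
    linarith
  have he : Real.log v ≤ v / Real.exp 1 := by
    have h := Real.log_le_sub_one_of_pos (x := v / Real.exp 1) (by positivity)
    rw [Real.log_div hv0.ne' (Real.exp_pos 1).ne', Real.log_exp] at h
    linarith
  have he' : v / Real.exp 1 ≤ v / 2.7 := by
    gcongr
    have := Real.exp_one_gt_d9
    linarith
  rw [Real.log_pow]
  push_cast
  norm_num at he' ⊢
  linarith

theorem sum_two_pow_omega_div_le_of_ge {x : ℝ} (hx : 100 ≤ x) :
    ∑ n ∈ Icc 1 ⌊x⌋₊, (2 : ℝ) ^ n.primeFactors.card / n ≤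
      3 / Real.pi ^ 2 * Real.log x ^ 2 + 1.3948 * Real.log x + 0.4107 +
        3.253 * x ^ (-(1 : ℝ) / 3) := by
  obtain ⟨Q, hQ⟩ := exists_logHarmonicSeq_limit
  have hx0 : 0 < x := by linarith
  obtain ⟨v, hv0, rfl⟩ : ∃ v : ℝ, 0 < v ∧ x = v ^ 6 :=
    ⟨x ^ (1 / 6 : ℝ), by positivity, by
      rw [← Real.rpow_natCast, ← Real.rpow_mul hx0.le]; norm_num⟩
  obtain ⟨u, hu⟩ : ∃ u, u = v ^ 3 := ⟨_, rfl⟩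
  have hx2 : v ^ 6 = u ^ 2 := by rw [hu]; ring
  have hu0 : 0 < u := by rw [hu]; positivity
  have hu10 : 10 ≤ u := by rw [hx2] at hx; nlinarith
  have hpow : (v ^ 6) ^ (-(1 : ℝ) / 3) = v / u := by
    rw [← Real.rpow_natCast, ← Real.rpow_mul hv0.le, hu]
    norm_num [Real.rpow_neg hv0.le]
    field_simp
  have hlog : Real.log u = Real.log (v ^ 6) / 2 := by
    rw [hx2, Real.log_pow]; push_cast; ring
  have hlog0 : 0 ≤ Real.log (v ^ 6) := Real.log_nonneg (by linarith)
  have hQ10 := hQ 10 (by norm_num)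
  have hq := logHarmonicSeq_ten_bounds
  have hγ := eulerMascheroni_upper
  have hγ' := eulerMascheroni_lower
  have hQu : Q ≤ 0.07282 := by norm_num at hQ10 hq ⊢; linarith
  have hQl : 0.0718 ≤ Q := by norm_num at hQ10 hq ⊢; linarith
  have hsum := sum_moebius_divisor_sum_le hQ (u := u) (by linarith)
  have hM := tsum_moebius_mul_quadratic (Real.log (v ^ 6)) Real.eulerMascheroniConstant
    (Real.eulerMascheroniConstant ^ 2 + 2 * Q) rfl rfl rfl
  rw [← hlog] at hM
  have hmain := sum_moebius_quadratic_le hu0 (Nat.lt_floor_add_one u).le (by linarith)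
    (by linarith) (by nlinarith) (by nlinarith) hM
  have h1 := mul_le_mul_of_nonneg_right (linear_coeff_le rfl rfl) hlog0
  have h0 := constant_coeff_le rfl rfl rfl hQu
  have hH := (abs_le.1 (abs_harmonic_floor_sub_log_le (t := u) (by linarith))).2
  have hinv : 1 / u ≤ 0.1 := by
    rw [div_le_iff₀ hu0]; linarith
  have herr : (harmonic ⌊u⌋₊ + 7 / 10) / u + (1 / u ^ 2 + 3 / u) ≤ 3.253 * (v / u) := by
    have e1 : (harmonic ⌊u⌋₊ + 7 / 10) / u + (1 / u ^ 2 + 3 / u) =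
        (harmonic ⌊u⌋₊ + 7 / 10 + 1 / u + 3) / u := by field_simp; ring
    have e2 : 1 / (2 * u) + 1 / (12 * u ^ 2) = 1 / 2 * (1 / u) + 1 / 12 * (1 / u) ^ 2 := by
      field_simp
    have e3 : (1 / u) ^ 2 ≤ 0.1 ^ 2 := by gcongr
    have he := error_term_le (hu ▸ hu10) hv0
    rw [← hu] at he
    rw [e1, ← mul_div_assoc]
    gcongr
    rw [e2] at hH
    norm_num at *
    linarith
  have e : 3 / Real.pi ^ 2 = 6 / Real.pi ^ 2 / 2 := by ring
  rw [hpow, e]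
  rw [← hx2] at hsum
  linarith

/-- An integer upper bound for `10 ^ 6 * ∑ k ≤ n, 2 ^ ω(k) / k`. -/
def scaledOmegaSum (n : ℕ) : ℕ :=
  ∑ k ∈ Icc 1 n, (10 ^ 6 * 2 ^ k.primeFactors.card / k + 1)

/-- An integer lower bound for `10 ^ 6 * log (n + 1)`. -/
def scaledLog (n : ℕ) : ℕ := ∑ k ∈ Icc 1 n, 2 * 10 ^ 6 / (2 * k + 1)

theorem sum_le_scaledOmegaSum (n : ℕ) :
    ∑ k ∈ Icc 1 n, (2 : ℝ) ^ k.primeFactors.card / k ≤ scaledOmegaSum n / 10 ^ 6 := by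
  rw [scaledOmegaSum, Nat.cast_sum, sum_div]
  refine sum_le_sum fun k _ => ?_
  rw [le_div_iff₀ (by positivity), div_mul_eq_mul_div, mul_comm]
  have h := Nat.lt_floor_add_one ((10 ^ 6 * 2 ^ k.primeFactors.card : ℕ) / (k : ℝ))
  rw [Nat.floor_div_natCast, Nat.floor_natCast] at h
  norm_num at h ⊢
  exact h.le

theorem scaledLog_le (n : ℕ) : (scaledLog n : ℝ) / 10 ^ 6 ≤ Real.log (n + 1) := by
  induction n with
  | zero => simp [scaledLog]
  | succ n ih =>
    have h := log_one_add_inv_lower (a := (n : ℝ) + 1) (by positivity)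
    have hdiv : ((2 * 10 ^ 6 / (2 * (n + 1) + 1) : ℕ) : ℝ) ≤
        2 * 10 ^ 6 / (2 * ((n : ℝ) + 1) + 1) := by
      refine Nat.cast_div_le.trans (le_of_eq ?_)
      norm_num
    have e : scaledLog (n + 1) = scaledLog n + 2 * 10 ^ 6 / (2 * (n + 1) + 1) := by
      rw [scaledLog, scaledLog, sum_Icc_succ_top (by omega)]
    have hpos : (0 : ℝ) ≤ 2 / (3 * (2 * ((n : ℝ) + 1) + 1) ^ 3) := by positivity
    rw [e]
    push_cast at hdiv ih ⊢
    have e2 : (2 : ℝ) * 10 ^ 6 / (2 * ((n : ℝ) + 1) + 1) / 10 ^ 6 =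
      2 / (2 * ((n : ℝ) + 1) + 1) := by field_simp
    have h3 := div_le_div_of_nonneg_right hdiv (show (0 : ℝ) ≤ 10 ^ 6 by positivity)
    rw [e2] at h3
    rw [add_div]
    linarith

theorem scaledOmegaSum_le_table : ∀ n ∈ range 99, 10 ^ 10 * scaledOmegaSum (n + 1) ≤
    3039 * scaledLog n ^ 2 + 13948 * 10 ^ 6 * scaledLog n + 11107 * 10 ^ 12 := by
  decide +kernel

theorem sum_two_pow_omega_div_le_of_lt {x : ℝ} (hx : 1 ≤ x) (hx' : x < 100) :
    ∑ n ∈ Icc 1 ⌊x⌋₊, (2 : ℝ) ^ n.primeFactors.card / n ≤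
      3 / Real.pi ^ 2 * Real.log x ^ 2 + 1.3948 * Real.log x + 0.4107 +
        3.253 * x ^ (-(1 : ℝ) / 3) := by
  have hx0 : 0 < x := by linarith
  obtain ⟨n, hn⟩ : ∃ n, ⌊x⌋₊ = n + 1 :=
    Nat.exists_eq_succ_of_ne_zero (Nat.floor_pos.2 hx).ne'
  have hn99 : n < 99 := by
    have := (Nat.floor_lt hx0.le).2 (show x < (100 : ℕ) by exact_mod_cast hx')
    omega
  have hnx : (n : ℝ) + 1 ≤ x := by
    have := Nat.floor_le hx0.le
    rw [hn] at this
    exact_mod_cast this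
  have htable : (10 ^ 10 * scaledOmegaSum (n + 1) : ℝ) ≤
      3039 * scaledLog n ^ 2 + 13948 * 10 ^ 6 * scaledLog n + 11107 * 10 ^ 12 := by
    exact_mod_cast scaledOmegaSum_le_table n (mem_range.2 hn99)
  have hsum := sum_le_scaledOmegaSum (n + 1)
  have hlog := (scaledLog_le n).trans (Real.log_le_log (by positivity) hnx)
  have hpow : 0.7 ≤ 3.253 * x ^ (-(1 : ℝ) / 3) := by
    have h : x ^ (1 / 3 : ℝ) ≤ 4.645 := by
      refine (Real.rpow_le_rpow hx0.le (show x ≤ 4.645 ^ 3 by norm_num; linarith)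
        (by norm_num)).trans (le_of_eq ?_)
      rw [← Real.rpow_natCast, ← Real.rpow_mul (by norm_num)]
      norm_num
    rw [neg_div, Real.rpow_neg hx0.le, ← div_eq_mul_inv, le_div_iff₀ (by positivity)]
    linarith
  have hpi : 0.3039 ≤ 3 / Real.pi ^ 2 := by
    have := six_div_pi_sq_bounds.1
    have e : 3 / Real.pi ^ 2 = 6 / Real.pi ^ 2 / 2 := by ring
    rw [e]
    linarith
  rw [hn]
  set l := (scaledLog n : ℝ) / 10 ^ 6 with hl
  have hl0 : 0 ≤ l := by positivity
  have e : (scaledLog n : ℝ) = 10 ^ 6 * l := by rw [hl]; field_simp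
  rw [e] at htable
  have hquad : 0.3039 * l ^ 2 ≤ 3 / Real.pi ^ 2 * Real.log x ^ 2 := by gcongr
  linarith

theorem stmt_15 (x : ℝ) (hx : 1 ≤ x) :
    ∑ n ∈ Finset.Icc 1 ⌊x⌋₊, (2 : ℝ) ^ n.primeFactors.card / n ≤
      3 / Real.pi ^ 2 * Real.log x ^ 2 + 1.3948 * Real.log x + 0.4107 +
        3.253 * x ^ (-(1 : ℝ) / 3) := by
  rcases lt_or_ge x 100 with h | h
  · exact sum_two_pow_omega_div_le_of_lt hx h
  · exact sum_two_pow_omega_div_le_of_ge h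
end

section
/- For all real x ≥ 1, ∑_{n ≤ x} 2^{ω(n)} ≤ (6/π²)·x·log x + 0.787·x + 8.14·x^{2/3} − 0.3762. -/
open Finset Filter Topology ArithmeticFunction
open scoped ArithmeticFunction.Moebius ArithmeticFunction.zeta
open Real (eulerMascheroniConstant)

/-- The summatory function `∑_{n ≤ N} τ(n)` of the number of divisors. -/
def divisorSummatory (N : ℕ) : ℕ := ∑ n ∈ Ioc 0 N, N / n

lemma two_pow_card_primeFactors {n : ℕ} (hn : n ≠ 0) :
    2 ^ n.primeFactors.card = #{d ∈ n.divisors | Squarefree d} := by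
  rw [card_eq_sum_ones {d ∈ n.divisors | Squarefree d}, Nat.sum_divisors_filter_squarefree hn,
    sum_const, card_powerset, Nat.factors_eq]
  simp

lemma sum_moebius_sq_dvd {m N : ℕ} (hm : m ≠ 0) (hmN : m ≤ N) :
    ∑ d ∈ Ioc 0 N with d ^ 2 ∣ m, μ d = if Squarefree m then 1 else 0 := by
  obtain ⟨a, b, hab, ha⟩ := Nat.sq_mul_squarefree m
  have hb : b ≠ 0 := by rintro rfl; simp at hab; omega
  have hset : {d ∈ Ioc 0 N | d ^ 2 ∣ m} = b.divisors := by
    ext d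
    simp only [mem_filter, mem_Ioc, Nat.mem_divisors]
    constructor
    · rintro ⟨_, hd⟩
      have hd0 : d ≠ 0 := by rintro rfl; simp at hd; omega
      refine ⟨(Nat.factorization_le_iff_dvd hd0 hb).1 fun p => ?_, hb⟩
      have h := (Nat.factorization_le_iff_dvd (pow_ne_zero 2 hd0) hm).2 hd p
      have hap := ha.natFactorization_le_one p
      rw [← hab, Nat.factorization_mul (pow_ne_zero 2 hb) ha.ne_zero] at h
      simp only [Nat.factorization_pow, Finsupp.add_apply, Finsupp.smul_apply, smul_eq_mul] at h
      omega
    · rintro ⟨hd, _⟩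
      have hdm : d ^ 2 ∣ m := hab ▸ (pow_dvd_pow_of_dvd hd 2).mul_right a
      have hd0 := Nat.pos_of_dvd_of_pos hd (Nat.pos_of_ne_zero hb)
      exact ⟨⟨hd0, ((Nat.le_self_pow two_ne_zero d).trans
        (Nat.le_of_dvd (Nat.pos_of_ne_zero hm) hdm)).trans hmN⟩, hdm⟩
  have hsq : Squarefree m ↔ b = 1 := by
    constructor
    · intro h
      exact Nat.isUnit_iff.1 (h b (hab ▸ by rw [← sq]; exact dvd_mul_right _ _))
    · rintro rfl
      simpa [← hab] using ha
  rw [hset, ← coe_mul_zeta_apply, moebius_mul_coe_zeta, one_apply]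
  simp [hsq]

lemma sum_two_pow_card_primeFactors (N : ℕ) :
    ∑ n ∈ Icc 1 N, (2 : ℤ) ^ n.primeFactors.card =
      ∑ d ∈ Ioc 0 N, μ d * divisorSummatory (N / d ^ 2) := by
  let f : ArithmeticFunction ℤ := ⟨fun n => if Squarefree n then 1 else 0, by simp⟩
  have h1 : ∑ n ∈ Icc 1 N, (2 : ℤ) ^ n.primeFactors.card = ∑ n ∈ Ioc 0 N, (f * ζ) n := by
    refine sum_congr rfl fun n hn => ?_
    rw [coe_mul_zeta_apply]
    have := two_pow_card_primeFactors (n := n) (by simp at hn; omega)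
    simp only [f, coe_mk, sum_boole]
    exact_mod_cast this
  have h2 : ∀ m ∈ Ioc 0 N, f m * ((N / m : ℕ) : ℤ) =
      ∑ d ∈ Ioc 0 N, if d ^ 2 ∣ m then μ d * ((N / m : ℕ) : ℤ) else 0 := by
    intro m hm
    rw [mem_Ioc] at hm
    rw [← sum_filter, ← sum_mul, sum_moebius_sq_dvd (by omega) hm.2]
    rfl
  rw [h1, sum_Ioc_mul_zeta_eq_sum, sum_congr rfl h2, sum_comm]
  refine sum_congr rfl fun d hd => ?_
  rw [mem_Ioc] at hd
  have hd2 : 0 < d ^ 2 := pow_pos hd.1 2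
  rw [← sum_filter, ← mul_sum, divisorSummatory, Nat.cast_sum]
  congr 1
  symm
  refine sum_bij (fun a _ => d ^ 2 * a) ?_ ?_ ?_ ?_
  · intro a ha
    simp only [mem_Ioc, mem_filter] at ha ⊢
    exact ⟨⟨by have := ha.1; positivity,
      by rw [mul_comm]; exact (Nat.le_div_iff_mul_le hd2).1 ha.2⟩, dvd_mul_right _ _⟩
  · intro a _ b _ h
    exact Nat.eq_of_mul_eq_mul_left hd2 h
  · rintro m hm
    simp only [mem_Ioc, mem_filter] at hm
    obtain ⟨⟨hm0, hmN⟩, a, rfl⟩ := hm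
    refine ⟨a, ?_, rfl⟩
    rw [mem_Ioc]
    exact ⟨Nat.pos_of_mul_pos_left hm0,
      (Nat.le_div_iff_mul_le hd2).2 (by rwa [mul_comm])⟩
  · intro a _
    rw [Nat.div_div_eq_div_mul]

/-- Dirichlet's hyperbola method. -/
lemma divisorSummatory_add_sq (N : ℕ) :
    divisorSummatory N + N.sqrt ^ 2 = 2 * ∑ n ∈ Ioc 0 N.sqrt, N / n := by
  set u := N.sqrt with hu
  have huN : u ≤ N := Nat.sqrt_le_self N
  have huu : u * u ≤ N := Nat.sqrt_le N
  have huu' : N < (u + 1) * (u + 1) := Nat.lt_succ_sqrt N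
  have hsplit : divisorSummatory N = ∑ n ∈ Ioc 0 u, N / n + ∑ n ∈ Ioc u N, N / n :=
    (sum_Ioc_consecutive _ (Nat.zero_le _) huN).symm
  have hA : ∀ a ∈ Ioc u N, N / a = #(bipartiteAbove (fun a b => a * b ≤ N) (Ioc 0 u) a) := by
    intro a ha
    rw [mem_Ioc] at ha
    have : bipartiteAbove (fun a b => a * b ≤ N) (Ioc 0 u) a = Ioc 0 (N / a) := by
      ext b
      simp only [mem_bipartiteAbove, mem_Ioc, Nat.le_div_iff_mul_le (show 0 < a by omega)]
      constructor
      · rintro ⟨h, h'⟩; exact ⟨h.1, by linarith⟩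
      · rintro ⟨h, h'⟩; exact ⟨⟨h, by by_contra! hc; nlinarith⟩, by linarith⟩
    rw [this, Nat.card_Ioc, Nat.sub_zero]
  have hB : ∀ b ∈ Ioc 0 u, #(bipartiteBelow (fun a b => a * b ≤ N) (Ioc u N) b) + u = N / b := by
    intro b hb
    rw [mem_Ioc] at hb
    have hb0 : 0 < b := hb.1
    have : bipartiteBelow (fun a b => a * b ≤ N) (Ioc u N) b = Ioc u (N / b) := by
      ext a
      simp only [mem_bipartiteBelow, mem_Ioc, Nat.le_div_iff_mul_le hb0]
      constructor
      · rintro ⟨h, h'⟩; exact ⟨h.1, h'⟩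
      · rintro ⟨h, h'⟩; exact ⟨⟨h, by nlinarith⟩, h'⟩
    have h2 : u ≤ N / b := (Nat.le_div_iff_mul_le hb0).2 (by nlinarith)
    rw [this, Nat.card_Ioc]
    omega
  rw [hsplit, sum_congr rfl hA, sum_card_bipartiteAbove_eq_sum_card_bipartiteBelow,
    ← sum_congr rfl hB, sum_add_distrib]
  simp
  ring

lemma antitone_harmonic_sub_log_add_half :
    Antitone fun n : ℕ => (harmonic n : ℝ) - Real.log (n + 1 / 2) := by
  refine antitone_nat_of_succ_le fun n => ?_
  have h := Real.le_log_one_add_of_nonneg (x := 1 / ((n : ℝ) + 1 / 2)) (by positivity)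
  have h1 : 1 + 1 / ((n : ℝ) + 1 / 2) = ((n : ℝ) + 1 + 1 / 2) / (n + 1 / 2) := by
    field_simp; ring
  have h2 : 2 * (1 / ((n : ℝ) + 1 / 2)) / (1 / ((n : ℝ) + 1 / 2) + 2) = ((n : ℝ) + 1)⁻¹ := by
    field_simp; ring
  rw [h1, h2, Real.log_div (by positivity) (by positivity)] at h
  rw [harmonic_succ]
  push_cast
  linarith

lemma eulerMascheroniConstant_le_harmonic_sub_log (n : ℕ) :
    eulerMascheroniConstant ≤ harmonic n - Real.log (n + 1 / 2) := by
  refine le_of_tendsto Real.tendsto_harmonic_sub_log_add_one ?_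
  filter_upwards [eventually_ge_atTop n] with m hm
  have h := antitone_harmonic_sub_log_add_half hm
  have h' : Real.log ((m : ℝ) + 1 / 2) ≤ Real.log (m + 1) :=
    Real.log_le_log (by positivity) (by linarith)
  simp only at h
  linarith

lemma sum_Ioc_inv_eq_harmonic (u : ℕ) : ∑ n ∈ Ioc 0 u, (n : ℝ)⁻¹ = harmonic u := by
  rw [harmonic_eq_sum_Icc]
  push_cast
  rfl

/-- The Dirichlet divisor problem with an explicit error term of square-root size. -/
lemma abs_divisorSummatory_sub_le {y : ℝ} (hy : 1 ≤ y) :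
    |(divisorSummatory ⌊y⌋₊ : ℝ) - (y * Real.log y + (2 * eulerMascheroniConstant - 1) * y)| ≤
      2 * √y := by
  set g := eulerMascheroniConstant
  set s := √y with hs
  have hs1 : 1 ≤ s := Real.one_le_sqrt.2 hy
  have hss : y = s ^ 2 := (Real.sq_sqrt (by linarith)).symm
  set u := Nat.sqrt ⌊y⌋₊ with hu
  have hus : (u : ℝ) ≤ s := by
    refine Real.le_sqrt_of_sq_le ?_
    have : u ^ 2 ≤ ⌊y⌋₊ := Nat.sqrt_le' _
    exact le_trans (by exact_mod_cast this) (Nat.floor_le (by linarith))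
  have hsu : s < u + 1 := by
    rw [hs, Real.sqrt_lt' (by positivity)]
    have : ⌊y⌋₊ < (u + 1) ^ 2 := Nat.lt_succ_sqrt' _
    exact_mod_cast (Nat.floor_lt (by linarith)).1 this
  have hu1 : (1 : ℝ) ≤ u := by
    have : 1 ≤ u := by
      by_contra! h
      have : (u : ℝ) = 0 := by exact_mod_cast Nat.lt_one_iff.1 h
      linarith
    exact_mod_cast this
  have hD : (divisorSummatory ⌊y⌋₊ : ℝ) + u ^ 2 = 2 * ∑ n ∈ Ioc 0 u, ((⌊y⌋₊ / n : ℕ) : ℝ) := by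
    exact_mod_cast divisorSummatory_add_sq ⌊y⌋₊
  have hup : ∑ n ∈ Ioc 0 u, ((⌊y⌋₊ / n : ℕ) : ℝ) ≤ y * harmonic u := by
    rw [← sum_Ioc_inv_eq_harmonic, mul_sum]
    refine sum_le_sum fun n _ => ?_
    rw [← Nat.floor_div_natCast, ← div_eq_mul_inv]
    exact Nat.floor_le (by positivity)
  have hlo : y * harmonic u - u ≤ ∑ n ∈ Ioc 0 u, ((⌊y⌋₊ / n : ℕ) : ℝ) := by
    have : y * harmonic u - u = ∑ n ∈ Ioc 0 u, (y * (n : ℝ)⁻¹ - 1) := by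
      rw [sum_sub_distrib, ← mul_sum, sum_Ioc_inv_eq_harmonic]; simp
    rw [this]
    refine sum_le_sum fun n _ => ?_
    rw [← Nat.floor_div_natCast, ← div_eq_mul_inv]
    exact (Nat.sub_one_lt_floor _).le
  have hlog : Real.log y = 2 * Real.log s := by rw [hss, Real.log_pow]; norm_num
  rw [hlog, abs_le]
  constructor
  · have hH := eulerMascheroniConstant_le_harmonic_sub_log u
    have hv : (0 : ℝ) < u + 1 / 2 := by positivity
    have hl : Real.log s - Real.log (u + 1 / 2) ≤ s / (u + 1 / 2) - 1 := by
      rw [← Real.log_div (by positivity) (by positivity)]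
      exact Real.log_le_sub_one_of_pos (by positivity)
    have h1 : y * (g + Real.log s - (s / (u + 1 / 2) - 1)) ≤ y * harmonic u :=
      mul_le_mul_of_nonneg_left (by linarith) (by linarith)
    have h2 : 2 * s ^ 2 * (s / (u + 1 / 2) - 1) ≤ s ^ 2 - u ^ 2 - 2 * u + 2 * s := by
      have : 2 * s ^ 2 * (s / (u + 1 / 2) - 1) = 2 * s ^ 2 * (s - (u + 1 / 2)) / (u + 1 / 2) := by
        field_simp
      rw [this, div_le_iff₀ hv]
      obtain ⟨t, ht⟩ : ∃ t, s = u + t := ⟨s - u, by ring⟩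
      have ht0 : 0 ≤ t := by linarith
      have ht1 : t ≤ 1 := by linarith
      rw [ht]
      nlinarith [mul_nonneg ht0 (sub_nonneg.2 ht1),
        mul_nonneg (mul_nonneg ht0 (sub_nonneg.2 ht1)) (sub_nonneg.2 hu1),
        mul_nonneg (mul_nonneg ht0 ht0) (sub_nonneg.2 ht1)]
    rw [hss] at *
    nlinarith
  · have hH := (Real.eulerMascheroniSeq_lt_eulerMascheroniConstant u).le
    rw [Real.eulerMascheroniSeq] at hH
    have hl : Real.log (u + 1) - Real.log s ≤ (u + 1) / s - 1 := by
      rw [← Real.log_div (by positivity) (by positivity)]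
      exact Real.log_le_sub_one_of_pos (by positivity)
    have h1 : y * harmonic u ≤ y * (g + Real.log s + ((u + 1) / s - 1)) :=
      mul_le_mul_of_nonneg_left (by linarith) (by linarith)
    have h2 : 2 * s ^ 2 * ((u + 1) / s - 1) = 2 * s * (u + 1 - s) := by
      field_simp
    rw [hss] at *
    nlinarith

lemma eulerMascheroniConstant_lt_d5 : eulerMascheroniConstant < 0.57725 := by
  have h := eulerMascheroniConstant_le_harmonic_sub_log 40
  have hlog : Real.log (((40 : ℕ) : ℝ) + 1 / 2) = 4 * Real.log 3 - Real.log 2 := by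
    rw [show (((40 : ℕ) : ℝ) + 1 / 2) = 3 ^ 4 / 2 by norm_num,
      Real.log_div (by norm_num) (by norm_num), Real.log_pow]
    norm_num
  have hH : (harmonic 40 : ℝ) < 4.2785431 := by
    have : harmonic 40 < 4.2785431 := by
      rw [harmonic]; norm_num [sum_range_succ]
    calc (harmonic 40 : ℝ) < ((4.2785431 : ℚ) : ℝ) := by exact_mod_cast this
      _ = 4.2785431 := by norm_num
  rw [hlog] at h
  linarith [Real.log_three_gt_d9, Real.log_two_lt_d9]

lemma log_le_sub_inv_div_two {t : ℝ} (ht : 1 ≤ t) : Real.log t ≤ (t - t⁻¹) / 2 := by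
  rw [← Real.sinh_log (by linarith), Real.self_le_sinh_iff]
  exact Real.log_nonneg ht

/-- Comparison of `log n / n²` with the integral of `log t / t²` over `[n - 1/2, n + 1/2]`. -/
lemma log_div_sq_le {n : ℝ} (hn : 8 ≤ n) :
    Real.log n / n ^ 2 ≤ (Real.log (n - 1 / 2) + 1) / (n - 1 / 2) -
      (Real.log (n + 1 / 2) + 1) / (n + 1 / 2) := by
  have ha : 0 < n - 1 / 2 := by linarith
  have hb : 0 < n + 1 / 2 := by linarith
  have hn0 : 0 < n := by linarith
  have hq : 0 < 4 * n ^ 2 - 1 := by nlinarith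
  have hab : 0 < (n - 1 / 2) * (n + 1 / 2) := mul_pos ha hb
  have hqab : 4 * n ^ 2 - 1 = 4 * ((n - 1 / 2) * (n + 1 / 2)) := by ring
  have hdiff : Real.log (n + 1 / 2) - Real.log (n - 1 / 2) ≤ 4 * n / (4 * n ^ 2 - 1) := by
    rw [← Real.log_div hb.ne' ha.ne']
    refine (log_le_sub_inv_div_two ((one_le_div ha).2 (by linarith))).trans_eq ?_
    rw [hqab]
    field_simp
    ring
  have hsum : 2 * Real.log n - 1 / (4 * n ^ 2 - 1) ≤
      Real.log (n - 1 / 2) + Real.log (n + 1 / 2) := by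
    have h := Real.one_sub_inv_le_log_of_pos
      (x := (n - 1 / 2) * (n + 1 / 2) / n ^ 2) (by positivity)
    rw [Real.log_div (by positivity) (by positivity), Real.log_mul ha.ne' hb.ne',
      Real.log_pow] at h
    have : 1 - ((n - 1 / 2) * (n + 1 / 2) / n ^ 2)⁻¹ = - (1 / (4 * n ^ 2 - 1)) := by
      have hsq : n ^ 2 = (n - 1 / 2) * (n + 1 / 2) + 1 / 4 := by ring
      rw [hqab, inv_div, hsq]
      generalize (n - 1 / 2) * (n + 1 / 2) = p at hab ⊢
      field_simp
      ring
    rw [this] at h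
    push_cast at h
    linarith
  have hlog : 2 ≤ Real.log n := by
    have h8 : Real.log 8 = 3 * Real.log 2 := by
      rw [show (8 : ℝ) = 2 ^ 3 by norm_num, Real.log_pow]; norm_num
    linarith [Real.log_le_log (by norm_num) hn, Real.log_two_gt_d9]
  have hrhs : (Real.log (n - 1 / 2) + 1) / (n - 1 / 2) -
      (Real.log (n + 1 / 2) + 1) / (n + 1 / 2) =
      4 * (1 - n * (Real.log (n + 1 / 2) - Real.log (n - 1 / 2)) +
        (Real.log (n - 1 / 2) + Real.log (n + 1 / 2)) / 2) / (4 * n ^ 2 - 1) := by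
    rw [hqab, div_sub_div _ _ ha.ne' hb.ne', div_eq_div_iff hab.ne' (by positivity)]
    ring
  rw [hrhs, div_le_div_iff₀ (by positivity) hq]
  have h1 := mul_le_mul_of_nonneg_left hdiff hn0.le
  have h2 : n * (4 * n / (4 * n ^ 2 - 1)) = 1 + 1 / (4 * n ^ 2 - 1) := by
    rw [mul_div_assoc', div_eq_iff hq.ne', add_mul, div_mul_cancel₀ _ hq.ne']
    ring
  have h3 : 1 / (4 * n ^ 2 - 1) ≤ 1 / (3 * n ^ 2) :=
    one_div_le_one_div_of_le (by positivity) (by nlinarith)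
  have h4 : Real.log n - 3 / 2 * (1 / (3 * n ^ 2)) ≤
      1 - n * (Real.log (n + 1 / 2) - Real.log (n - 1 / 2)) +
        (Real.log (n - 1 / 2) + Real.log (n + 1 / 2)) / 2 := by linarith
  have h5 := mul_le_mul_of_nonneg_right h4 (show 0 ≤ 4 * n ^ 2 by positivity)
  have h6 : (Real.log n - 3 / 2 * (1 / (3 * n ^ 2))) * (4 * n ^ 2) =
      Real.log n * (4 * n ^ 2) - 2 := by field_simp; ring
  nlinarith

lemma sum_log_div_sq_le (n : ℕ) :
    ∑ i ∈ range n, Real.log i / (i : ℝ) ^ 2 ≤ 0.93764 := by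
  have hnn : ∀ i : ℕ, 0 ≤ Real.log i / (i : ℝ) ^ 2 := fun i =>
    div_nonneg (Real.log_natCast_nonneg i) (by positivity)
  have hpart : ∀ k : ℕ, ∑ i ∈ range (k + 13), Real.log i / (i : ℝ) ^ 2 ≤
      ∑ i ∈ range 13, Real.log i / (i : ℝ) ^ 2 + (Real.log (25 / 2) + 1) / (25 / 2) -
        (Real.log (k + 25 / 2) + 1) / (k + 25 / 2) := by
    intro k
    induction k with
    | zero => simp
    | succ k ih =>
      rw [show k + 1 + 13 = k + 13 + 1 by ring, sum_range_succ]
      have h := log_div_sq_le (n := ((k + 13 : ℕ) : ℝ))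
        (by have := Nat.cast_nonneg (α := ℝ) k; push_cast; linarith)
      have e1 : ((k + 13 : ℕ) : ℝ) - 1 / 2 = k + 25 / 2 := by push_cast; ring
      have e2 : ((k + 13 : ℕ) : ℝ) + 1 / 2 = ((k + 1 : ℕ) : ℝ) + 25 / 2 := by push_cast; ring
      rw [e1, e2] at h
      linarith
  have hG : 0 ≤ (Real.log (n + 25 / 2) + 1) / ((n : ℝ) + 25 / 2) := by
    have := Real.log_nonneg (x := (n : ℝ) + 25 / 2)
      (by have := Nat.cast_nonneg (α := ℝ) n; linarith)
    positivity
  have hmono : ∑ i ∈ range n, Real.log i / (i : ℝ) ^ 2 ≤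
      ∑ i ∈ range (n + 13), Real.log i / (i : ℝ) ^ 2 :=
    sum_le_sum_of_subset_of_nonneg (range_subset_range.2 (by omega)) fun i _ _ => hnn i
  have l4 : Real.log 4 = 2 * Real.log 2 := Real.log_four_eq
  have l6 : Real.log 6 = Real.log 2 + Real.log 3 := by
    rw [← Real.log_mul (by norm_num) (by norm_num)]; norm_num
  have l8 : Real.log 8 = 3 * Real.log 2 := by
    rw [show (8 : ℝ) = 2 ^ 3 by norm_num, Real.log_pow]; norm_num
  have l9 : Real.log 9 = 2 * Real.log 3 := by
    rw [show (9 : ℝ) = 3 ^ 2 by norm_num, Real.log_pow]; norm_num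
  have l10 : Real.log 10 = Real.log 2 + Real.log 5 := Real.log_ten_eq
  have l12 : Real.log 12 = 2 * Real.log 2 + Real.log 3 := by
    rw [← l4, ← Real.log_mul (by norm_num) (by norm_num)]; norm_num
  have l25 : Real.log (25 / 2) = 2 * Real.log 5 - Real.log 2 := by
    rw [show (25 / 2 : ℝ) = 5 ^ 2 / 2 by norm_num, Real.log_div (by norm_num) (by norm_num),
      Real.log_pow]
    norm_num
  have l7 : 4 * Real.log 7 ≤ 5 * Real.log 2 + Real.log 3 + 2 * Real.log 5 + 1 / 2400 := by
    have h := Real.log_le_sub_one_of_pos (x := 7 ^ 4 / (2 ^ 5 * 3 * 5 ^ 2)) (by norm_num)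
    rw [Real.log_div (by norm_num) (by norm_num), Real.log_mul (by norm_num) (by norm_num),
      Real.log_mul (by norm_num) (by norm_num), Real.log_pow, Real.log_pow, Real.log_pow] at h
    norm_num at h ⊢
    linarith
  have l11 : 2 * Real.log 11 ≤ 3 * Real.log 2 + Real.log 3 + Real.log 5 + 1 / 120 := by
    have h := Real.log_le_sub_one_of_pos (x := 11 ^ 2 / (2 ^ 3 * 3 * 5)) (by norm_num)
    rw [Real.log_div (by norm_num) (by norm_num), Real.log_mul (by norm_num) (by norm_num),
      Real.log_mul (by norm_num) (by norm_num), Real.log_pow, Real.log_pow] at h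
    norm_num at h ⊢
    linarith
  have hS : ∑ i ∈ range 13, Real.log i / (i : ℝ) ^ 2 + (Real.log (25 / 2) + 1) / (25 / 2) ≤
      0.93764 := by
    simp only [sum_range_succ, range_zero, sum_empty]
    push_cast
    rw [Real.log_one, Real.log_zero, l4, l6, l8, l9, l10, l12, l25]
    linarith [Real.log_two_lt_d9, Real.log_three_lt_d9, Real.log_five_lt_d9,
      Real.log_two_gt_d9]
  linarith [hpart n]

lemma tsum_log_div_sq_le : ∑' n : ℕ, Real.log n / (n : ℝ) ^ 2 ≤ 0.93764 :=
  Real.tsum_le_of_sum_range_le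
    (fun i => div_nonneg (Real.log_natCast_nonneg i) (by positivity)) sum_log_div_sq_le

lemma hasSum_div_sq_of_LSeriesSummable {f : ℕ → ℝ} (h : LSeriesSummable (fun n => (f n : ℂ)) 2) :
    HasSum (fun n : ℕ => f n / (n : ℝ) ^ 2) (LSeries (fun n => (f n : ℂ)) 2).re := by
  have h1 := Complex.hasSum_re h.LSeriesHasSum
  convert h1 using 2 with n
  rcases eq_or_ne n 0 with rfl | hn
  · simp
  · rw [LSeries.term_of_ne_zero hn]
    have : (f n : ℂ) / (n : ℂ) ^ (2 : ℂ) = ((f n / (n : ℝ) ^ 2 : ℝ) : ℂ) := by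
      push_cast
      norm_cast
    rw [this, Complex.ofReal_re]

lemma hasSum_moebius_div_sq :
    HasSum (fun d : ℕ => (μ d : ℝ) / (d : ℝ) ^ 2) (6 / Real.pi ^ 2) := by
  have h2 : 1 < (2 : ℂ).re := by norm_num
  have hsum : LSeriesSummable (fun n => (((μ n : ℤ) : ℝ) : ℂ)) 2 := by
    simpa using LSeriesSummable_moebius_iff.2 h2
  have hval : LSeries (fun n => (((μ n : ℤ) : ℝ) : ℂ)) 2 = ((6 / Real.pi ^ 2 : ℝ) : ℂ) := by
    have h := LSeries_one_mul_Lseries_moebius h2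
    rw [LSeries_one_eq_riemannZeta h2, riemannZeta_two] at h
    have hpi : (Real.pi : ℂ) ≠ 0 := by exact_mod_cast Real.pi_ne_zero
    push_cast
    rw [eq_div_iff (by positivity)]
    linear_combination 6 * h
  simpa only [hval, Complex.ofReal_re] using hasSum_div_sq_of_LSeriesSummable hsum

lemma hasSum_moebius_mul_log_div_sq :
    HasSum (fun d : ℕ => Real.log d * (μ d : ℝ) / (d : ℝ) ^ 2)
      (-(6 / Real.pi ^ 2) ^ 2 * ∑' n : ℕ, Real.log n / (n : ℝ) ^ 2) := by
  have h2 : 1 < (2 : ℂ).re := by norm_num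
  have hμ : LSeries.abscissaOfAbsConv (fun n => ((μ n : ℤ) : ℂ)) < (2 : ℂ).re := by
    rw [abscissaOfAbsConv_moebius]; exact_mod_cast h2
  have h1 : LSeries.abscissaOfAbsConv 1 < (2 : ℂ).re := by
    rw [LSeries.abscissaOfAbsConv_one]; exact_mod_cast h2
  have eμ : LSeries.logMul (fun n => ((μ n : ℤ) : ℂ)) =
      fun n : ℕ => ((Real.log n * (μ n : ℝ) : ℝ) : ℂ) := by
    ext n; simp [LSeries.logMul]
  have e1 : LSeries.logMul 1 = fun n : ℕ => ((Real.log n : ℝ) : ℂ) := by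
    ext n; simp [LSeries.logMul]
  have sμ := hasSum_div_sq_of_LSeriesSummable (eμ ▸ LSeriesSummable_logMul_of_lt_re hμ)
  have s1 := hasSum_div_sq_of_LSeriesSummable (e1 ▸ LSeriesSummable_logMul_of_lt_re h1)
  have hd := (LSeries_hasDerivAt h1).mul (LSeries_hasDerivAt hμ)
  have hc : HasDerivAt (LSeries 1 * LSeries (fun n => ((μ n : ℤ) : ℂ))) 0 2 := by
    refine (hasDerivAt_const (2 : ℂ) (1 : ℂ)).congr_of_eventuallyEq ?_
    filter_upwards [(isOpen_lt continuous_const Complex.continuous_re).mem_nhds h2] with s hs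
    exact LSeries_one_mul_Lseries_moebius hs
  have key := hd.unique hc
  have hprod := LSeries_one_mul_Lseries_moebius h2
  have hz : LSeries 1 2 = (Real.pi : ℂ) ^ 2 / 6 := by
    rw [LSeries_one_eq_riemannZeta h2, riemannZeta_two]
  have hpi : (Real.pi : ℂ) ≠ 0 := by exact_mod_cast Real.pi_ne_zero
  rw [hz] at key hprod
  have hm : LSeries (fun n => ((μ n : ℤ) : ℂ)) 2 = 6 / (Real.pi : ℂ) ^ 2 := by
    rw [eq_div_iff (by positivity)]
    linear_combination 6 * hprod
  rw [hm, eμ, e1] at key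
  have hval : LSeries (fun n : ℕ => ((Real.log n * (μ n : ℝ) : ℝ) : ℂ)) 2 =
      ((-(6 / Real.pi ^ 2) ^ 2 : ℝ) : ℂ) * LSeries (fun n : ℕ => ((Real.log n : ℝ) : ℂ)) 2 := by
    push_cast at key ⊢
    field_simp at key ⊢
    linear_combination -key
  rw [hval, Complex.re_ofReal_mul, ← s1.tsum_eq] at sμ
  exact sμ

/-- The error term in the divisor problem, bounded on all of `(0, ∞)`. -/
lemma abs_divisorSummatory_sub_le_rpow {y : ℝ} (hy : 0 < y) :
    |(divisorSummatory ⌊y⌋₊ : ℝ) - (y * Real.log y + (2 * eulerMascheroniConstant - 1) * y)| ≤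
      2 * y ^ (2 / 3 : ℝ) := by
  rcases le_or_gt 1 y with h1 | h1
  · refine (abs_divisorSummatory_sub_le h1).trans ?_
    rw [Real.sqrt_eq_rpow]
    exact mul_le_mul_of_nonneg_left
      (Real.rpow_le_rpow_of_exponent_le h1 (by norm_num)) (by norm_num)
  · have hγ := Real.one_half_lt_eulerMascheroniConstant
    have hγ' := Real.eulerMascheroniConstant_lt_two_thirds
    have hy23 : y ≤ y ^ (2 / 3 : ℝ) := by
      simpa using Real.rpow_le_rpow_of_exponent_ge hy h1.le (show (2 / 3 : ℝ) ≤ 1 by norm_num)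
    have hlog0 : y * Real.log y ≤ 0 :=
      mul_nonpos_of_nonneg_of_nonpos hy.le (Real.log_nonpos hy.le h1.le)
    have hlog : -(3 / 2 * y ^ (2 / 3 : ℝ)) ≤ y * Real.log y := by
      have hp := Real.rpow_pos_of_pos hy (1 / 3)
      have hl : Real.log y = 3 * Real.log (y ^ (1 / 3 : ℝ)) := by
        rw [Real.log_rpow hy]; ring
      have hb : -(Real.log (y ^ (1 / 3 : ℝ)) * y ^ (1 / 3 : ℝ)) ≤ 1 / 2 := by
        have := Real.add_one_le_exp (-Real.log (y ^ (1 / 3 : ℝ)) - 1)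
        rw [Real.exp_sub, Real.exp_neg, Real.exp_log hp] at this
        have he : (2 : ℝ) < Real.exp 1 := by linarith [Real.exp_one_gt_d9]
        have h3 : (y ^ (1 / 3 : ℝ))⁻¹ / Real.exp 1 * y ^ (1 / 3 : ℝ) ≤ 1 / 2 := by
          rw [div_mul_eq_mul_div, inv_mul_cancel₀ hp.ne']
          exact one_div_le_one_div_of_le (by norm_num) he.le
        nlinarith
      have hy' : y = y ^ (2 / 3 : ℝ) * y ^ (1 / 3 : ℝ) := by
        rw [← Real.rpow_add hy]; norm_num
      have hq := Real.rpow_pos_of_pos hy (2 / 3)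
      calc -(3 / 2 * y ^ (2 / 3 : ℝ))
          ≤ 3 * y ^ (2 / 3 : ℝ) * (Real.log (y ^ (1 / 3 : ℝ)) * y ^ (1 / 3 : ℝ)) := by nlinarith
        _ = (y ^ (2 / 3 : ℝ) * y ^ (1 / 3 : ℝ)) * (3 * Real.log (y ^ (1 / 3 : ℝ))) := by ring
        _ = y * Real.log y := by rw [← hy', ← hl]
    have h0 : divisorSummatory ⌊y⌋₊ = 0 := by
      rw [Nat.floor_eq_zero.2 h1]; rfl
    rw [h0, abs_le]
    push_cast
    constructor <;> nlinarith

lemma rpow_neg_four_thirds_le {t : ℝ} (ht : 1 < t) :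
    (t ^ (4 / 3 : ℝ))⁻¹ ≤
      3 * ((t - 1) ^ (1 / 3 : ℝ))⁻¹ - 3 * (t ^ (1 / 3 : ℝ))⁻¹ := by
  have ht0 : 0 < t := by linarith
  have ht1 : 0 < t - 1 := by linarith
  have hq4 : t ^ (4 / 3 : ℝ) = (t ^ (1 / 3 : ℝ)) ^ 4 := by
    rw [← Real.rpow_natCast, ← Real.rpow_mul ht0.le]; norm_num
  have hq3 : (t ^ (1 / 3 : ℝ)) ^ 3 = t := by
    rw [← Real.rpow_natCast, ← Real.rpow_mul ht0.le]; norm_num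
  have hp3 : ((t - 1) ^ (1 / 3 : ℝ)) ^ 3 = t - 1 := by
    rw [← Real.rpow_natCast, ← Real.rpow_mul ht1.le]; norm_num
  have hpq : (t - 1) ^ (1 / 3 : ℝ) ≤ t ^ (1 / 3 : ℝ) :=
    Real.rpow_le_rpow ht1.le (by linarith) (by norm_num)
  have hp := Real.rpow_pos_of_pos ht1 (1 / 3)
  have hq := Real.rpow_pos_of_pos ht0 (1 / 3)
  rw [hq4]
  generalize t ^ (1 / 3 : ℝ) = q at *
  generalize (t - 1) ^ (1 / 3 : ℝ) = p at *
  have h1 : (q - p) * (q ^ 2 + q * p + p ^ 2) = 1 := by linear_combination hq3 - hp3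
  have h2 : 1 ≤ (q - p) * (3 * q ^ 2) := by
    rw [← h1]
    exact mul_le_mul_of_nonneg_left (by nlinarith) (by linarith)
  have h3 : 3 * p⁻¹ - 3 * q⁻¹ = 3 * (q - p) / (p * q) := by field_simp
  rw [h3, inv_eq_one_div, div_le_div_iff₀ (by positivity) (by positivity)]
  have h4 : q * q * 1 ≤ q * q * ((q - p) * (3 * q ^ 2)) :=
    mul_le_mul_of_nonneg_left h2 (by positivity)
  nlinarith

lemma tsum_rpow_neg_four_thirds_le : ∑' n : ℕ, ((n : ℝ) ^ (4 / 3 : ℝ))⁻¹ ≤ 3.8 := by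
  have hnn : ∀ i : ℕ, 0 ≤ ((i : ℝ) ^ (4 / 3 : ℝ))⁻¹ := fun i => by positivity
  refine Real.tsum_le_of_sum_range_le hnn fun n => ?_
  have hpart : ∀ k : ℕ, ∑ i ∈ range (k + 3), ((i : ℝ) ^ (4 / 3 : ℝ))⁻¹ ≤
      ∑ i ∈ range 3, ((i : ℝ) ^ (4 / 3 : ℝ))⁻¹ + 3 * ((2 : ℝ) ^ (1 / 3 : ℝ))⁻¹ -
        3 * (((k : ℝ) + 2) ^ (1 / 3 : ℝ))⁻¹ := by
    intro k
    induction k with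
    | zero => simp
    | succ k ih =>
      rw [show k + 1 + 3 = k + 3 + 1 by ring, sum_range_succ]
      have h := rpow_neg_four_thirds_le (t := ((k + 3 : ℕ) : ℝ))
        (by have := Nat.cast_nonneg (α := ℝ) k; push_cast; linarith)
      have e1 : ((k + 3 : ℕ) : ℝ) - 1 = k + 2 := by push_cast; ring
      have e2 : ((k + 1 : ℕ) : ℝ) + 2 = ((k + 3 : ℕ) : ℝ) := by push_cast; ring
      rw [e1] at h
      rw [e2]
      linarith
  have hmono : ∑ i ∈ range n, ((i : ℝ) ^ (4 / 3 : ℝ))⁻¹ ≤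
      ∑ i ∈ range (n + 3), ((i : ℝ) ^ (4 / 3 : ℝ))⁻¹ :=
    sum_le_sum_of_subset_of_nonneg (range_subset_range.2 (by omega)) fun i _ _ => hnn i
  have hnonneg : 0 ≤ 3 * (((n : ℝ) + 2) ^ (1 / 3 : ℝ))⁻¹ := by positivity
  have h2 : (2 : ℝ) ^ (4 / 3 : ℝ) = 2 * 2 ^ (1 / 3 : ℝ) := by
    rw [show (4 / 3 : ℝ) = 1 + 1 / 3 by norm_num, Real.rpow_add two_pos, Real.rpow_one]
  have hr : ((2 : ℝ) ^ (1 / 3 : ℝ))⁻¹ ≤ 4 / 5 := by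
    rw [inv_le_comm₀ (by positivity) (by norm_num)]
    rw [show (4 / 5 : ℝ)⁻¹ = ((5 / 4 : ℝ) ^ 3) ^ (1 / 3 : ℝ) by
      rw [← Real.rpow_natCast, ← Real.rpow_mul (by norm_num)]; norm_num]
    exact Real.rpow_le_rpow (by norm_num) (by norm_num) (by norm_num)
  have h3 : ∑ i ∈ range 3, ((i : ℝ) ^ (4 / 3 : ℝ))⁻¹ = 1 + 1 / 2 * ((2 : ℝ) ^ (1 / 3 : ℝ))⁻¹ := by
    simp only [sum_range_succ, range_zero, sum_empty]
    push_cast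
    rw [Real.one_rpow, Real.zero_rpow (by norm_num), h2]
    ring
  linarith [hpart n]

theorem stmt_16 (x : ℝ) (hx : 1 ≤ x) :
    ∑ n ∈ Finset.Icc 1 ⌊x⌋₊, (2 : ℝ) ^ n.primeFactors.card ≤
      6 / Real.pi ^ 2 * x * Real.log x + 0.787 * x + 8.14 * x ^ ((2 : ℝ) / 3) -
        0.3762 := by
  have hx0 : 0 < x := by linarith
  have hpi : 6 / Real.pi ^ 2 ≤ 0.607928 := by
    rw [div_le_iff₀ (by positivity)]
    nlinarith [Real.pi_gt_d6]
  have hpi0 : 0 ≤ 6 / Real.pi ^ 2 := by positivity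
  set c := 6 / Real.pi ^ 2
  set g := eulerMascheroniConstant
  set Z := ∑' n : ℕ, Real.log n / (n : ℝ) ^ 2
  have hE : ∑ n ∈ Finset.Icc 1 ⌊x⌋₊, (2 : ℝ) ^ n.primeFactors.card =
      ∑ d ∈ Ioc 0 ⌊x⌋₊, (μ d : ℝ) * divisorSummatory (⌊x⌋₊ / d ^ 2) := by
    exact_mod_cast congrArg (Int.cast (R := ℝ)) (sum_two_pow_card_primeFactors ⌊x⌋₊)
  have hterm : ∀ d : ℕ, (μ d : ℝ) * divisorSummatory (⌊x⌋₊ / d ^ 2) ≤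
      x * (Real.log x + (2 * g - 1)) * ((μ d : ℝ) / (d : ℝ) ^ 2) -
        2 * x * (Real.log d * (μ d : ℝ) / (d : ℝ) ^ 2) +
        2 * x ^ (2 / 3 : ℝ) * ((d : ℝ) ^ (4 / 3 : ℝ))⁻¹ := by
    intro d
    rcases Nat.eq_zero_or_pos d with rfl | hd
    · simp
    have hd0 : (0 : ℝ) < d := by exact_mod_cast hd
    have h := abs_divisorSummatory_sub_le_rpow (y := x / (d : ℝ) ^ 2) (by positivity)
    have hfloor : ⌊x / (d : ℝ) ^ 2⌋₊ = ⌊x⌋₊ / d ^ 2 := by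
      exact_mod_cast Nat.floor_div_natCast x (d ^ 2)
    have hpow : (x / (d : ℝ) ^ 2) ^ (2 / 3 : ℝ) = x ^ (2 / 3 : ℝ) * ((d : ℝ) ^ (4 / 3 : ℝ))⁻¹ := by
      rw [Real.div_rpow hx0.le (by positivity), div_eq_mul_inv, ← Real.rpow_natCast,
        ← Real.rpow_mul hd0.le]
      norm_num
    have hμ : |(μ d : ℝ)| ≤ 1 := by exact_mod_cast abs_moebius_le_one
    rw [hfloor, hpow, Real.log_div hx0.ne' (by positivity), Real.log_pow] at h
    have h' := (le_abs_self _).trans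
      ((abs_mul _ _).trans_le (mul_le_mul hμ h (abs_nonneg _) zero_le_one))
    refine le_of_sub_nonneg ((sub_nonneg.2 h').trans_eq ?_)
    push_cast
    ring
  have hsum43 : Summable fun n : ℕ => ((n : ℝ) ^ (4 / 3 : ℝ))⁻¹ :=
    Real.summable_nat_rpow_inv.2 (by norm_num)
  have hL : HasSum (fun d : ℕ => (μ d : ℝ) * divisorSummatory (⌊x⌋₊ / d ^ 2))
      (∑ d ∈ Ioc 0 ⌊x⌋₊, (μ d : ℝ) * divisorSummatory (⌊x⌋₊ / d ^ 2)) := by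
    refine hasSum_sum_of_ne_finset_zero fun d hd => ?_
    rcases Nat.eq_zero_or_pos d with rfl | hd0
    · simp
    have hlt : ⌊x⌋₊ < d ^ 2 := by
      have : ⌊x⌋₊ < d := by simpa [hd0] using hd
      nlinarith
    simp [Nat.div_eq_of_lt hlt, divisorSummatory]
  have hmain := hasSum_le hterm hL
    (((hasSum_moebius_div_sq.mul_left (x * (Real.log x + (2 * g - 1)))).sub
      (hasSum_moebius_mul_log_div_sq.mul_left (2 * x))).add
      (hsum43.hasSum.mul_left (2 * x ^ (2 / 3 : ℝ))))
  have hx23 : 1 ≤ x ^ (2 / 3 : ℝ) := Real.one_le_rpow hx (by norm_num)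
  have herr := mul_le_mul_of_nonneg_left tsum_rpow_neg_four_thirds_le
    (show 0 ≤ 2 * x ^ (2 / 3 : ℝ) by positivity)
  have hconst : c * (2 * g - 1) + 2 * (c ^ 2 * Z) ≤ 0.787 := by
    have h1 : c * (2 * g - 1) ≤ 0.607928 * (2 * 0.57725 - 1) :=
      mul_le_mul hpi (by linarith [eulerMascheroniConstant_lt_d5])
        (by linarith [Real.one_half_lt_eulerMascheroniConstant]) (by norm_num)
    have h2 : c ^ 2 * Z ≤ 0.607928 ^ 2 * 0.93764 :=
      mul_le_mul (pow_le_pow_left₀ hpi0 hpi 2) tsum_log_div_sq_le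
        (tsum_nonneg fun n => div_nonneg (Real.log_natCast_nonneg n) (by positivity))
        (by norm_num)
    norm_num at h1 h2 ⊢
    linarith
  have hlin := mul_le_mul_of_nonneg_left hconst hx0.le
  rw [hE]
  linarith
end
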